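/- arXiv:1104.3659 — 3 statements merged into one kernel-verified Lean document; each statement's English description precedes it below -/
import Mathlib

section
/- Let n be a nonnegative integer. Then ζ(2n+3) = (1/(2n+2)) ∑_{j=0}^{n} (3j+5) ∑_{k=1}^∞ (−1)^{k−1} / (k^{2j+3} C(2k, k)) · ∑_{r=0}^{n−j} (−4)^r e_r(k) g_{n−j−r}(k), where e_r(k) = ∑_{1 ≤ j_1 < j_2 < ⋯ < j_r ≤ k−1} (j_1 j_2 ⋯ j_r)^{−2} (with e_0(k) = 1), h_s(k) = ∑_{1 ≤ j_1 ≤ j_2 ≤ ⋯ ≤ j_s ≤ k−1} (j_1 j_2 ⋯ j_s)^{−2} (with h_0(k) = 1), and g_r(k) = ∑_{s=0}^{r} h_s(k) h_{r−s}(k). -/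
/-!
Since `∑ₙ (2n + 2) Xⁿ / k^(2n+3) = 2k / (k² - X)²` and `∑ⱼ (3j + 5) uʲ = (5 - 2u) / (1 - u)²`, the
theorem is the coefficient of `Xⁿ` in

`∑ₖ 2k / (k² - X)² = ∑ₖ (-1)^(k-1) / (k C(2k,k)) · (5k² - 2X) / (k² - X)² ·`
`  ∏_{m<k} (1 - 4X/m²) / (1 - X/m²)²`.

This identity comes from a WZ pair of formal power series,
`wzF n k - wzF (n+1) k = wzG n k - wzG n (k+1)`, with `wzF 0 k` the `k`-th term on the left and
`wzG m 0` the `m`-th term on the right. Summing over the square `[0, N)²` leaves the remainders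
`∑ₖ wzF N k` and `∑ₘ wzG m N`. Their coefficients tend to `0`: the truncated `ℓ¹` norm of the
coefficients is submultiplicative, so it is bounded on the products `∏ (1 - 4X/m²)` and
`∏ (1 - X/m²)⁻¹` because `∑ 1/m²` converges, while the scalar factor of the pair is at most
`(n + k + 1)⁻⁴`.
-/

/-- `esym r k` is the `r`-th elementary symmetric function of `1/1², …, 1/(k-1)²`:
`e_r(k) = ∑_{1 ≤ j₁ < ⋯ < j_r ≤ k-1} (j₁ ⋯ j_r)⁻²`, with `e_0(k) = 1`. -/
noncomputable def esym (r k : ℕ) : ℝ :=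
  ∑ S ∈ (Finset.range (k - 1)).powersetCard r, ∏ j ∈ S, 1 / ((j : ℝ) + 1) ^ 2

/-- `hsym s k` is the complete homogeneous sum
`h_s(k) = ∑_{1 ≤ j₁ ≤ ⋯ ≤ j_s ≤ k-1} (j₁ ⋯ j_s)⁻²`, with `h_0(k) = 1`. -/
noncomputable def hsym (s k : ℕ) : ℝ :=
  ∑ m ∈ (Finset.range (k - 1)).sym s,
    ((m : Multiset ℕ).map fun j => 1 / ((j : ℝ) + 1) ^ 2).prod

/-- `gsym r k = ∑_{s=0}^{r} h_s(k) h_{r-s}(k)`, the coefficient of `t^r` in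
`∏_{j=1}^{k-1} (1 - t/j²)⁻²`. -/
noncomputable def gsym (r k : ℕ) : ℝ :=
  ∑ s ∈ Finset.range (r + 1), hsym s k * hsym (r - s) k

open Filter Finset PowerSeries Topology

section GeneratingFunctions

variable {ι R : Type*} [CommRing R]

/-- The geometric series `(1 - a X)⁻¹`, the generating function of the complete homogeneous sums in
one variable `a`. -/
def geomSeries (a : R) : R⟦X⟧ := mk (a ^ ·)

lemma geomSeries_mul_one_sub (a : R) : geomSeries a * (1 - C a * X) = 1 := by
  ext n
  rw [mul_sub, mul_one, ← mul_assoc, map_sub]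
  cases n with
  | zero => simp [geomSeries]
  | succ n => simp [geomSeries, coeff_succ_mul_X, coeff_mul_C, pow_succ, coeff_one]

lemma geomSeries_sq (a : R) : geomSeries a ^ 2 = mk fun n => ((n : R) + 1) * a ^ n := by
  ext n
  have h (p : ℕ × ℕ) (hp : p ∈ antidiagonal n) : a ^ p.1 * a ^ p.2 = a ^ n := by
    rw [← pow_add, mem_antidiagonal.1 hp]
  simp [geomSeries, sq, coeff_mul, sum_congr rfl h]

lemma five_sub_two_mul_geomSeries_sq (a : R) :
    (5 - 2 * (C a * X)) * geomSeries a ^ 2 = mk fun n => (3 * (n : R) + 5) * a ^ n := by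
  have h : (5 - 2 * (C a * X)) * geomSeries a ^ 2
      = C 5 * geomSeries a ^ 2 - C (2 * a) * (geomSeries a ^ 2 * X) := by
    simp only [map_mul, map_ofNat]
    ring
  rw [h, geomSeries_sq]
  ext n
  cases n with
  | zero => simp
  | succ n =>
    simp only [map_sub, coeff_C_mul, coeff_succ_mul_X, coeff_mk]
    push_cast
    ring

lemma coeff_prod_one_add_C_mul_X (s : Finset ι) (a : ι → R) (n : ℕ) :
    coeff n (∏ i ∈ s, (1 + C (a i) * X)) = ∑ S ∈ s.powersetCard n, ∏ i ∈ S, a i := by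
  classical
  rw [prod_one_add, map_sum, powersetCard_eq_filter, sum_filter]
  refine sum_congr rfl fun S _ => ?_
  rw [prod_mul_distrib, prod_const, ← map_prod, coeff_C_mul, coeff_X_pow, mul_ite, mul_one,
    mul_zero]
  simp only [eq_comm]

lemma coeff_prod_geomSeries [DecidableEq ι] (s : Finset ι) (a : ι → R) (n : ℕ) :
    coeff n (∏ i ∈ s, geomSeries (a i)) = ∑ m ∈ s.sym n, ((m : Multiset ι).map a).prod := by
  induction s using Finset.induction generalizing n with
  | empty =>
    cases n with
    | zero => simp [Sym.eq_nil_of_card_zero]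
    | succ n => simp [coeff_one]
  | insert i u hi ih =>
    rw [prod_insert hi, coeff_mul, Nat.sum_antidiagonal_eq_sum_range_succ_mk,
      ← sum_coe_sort (Finset.sym _ _), ← Equiv.sum_comp (symInsertEquiv hi).symm,
      ← univ_sigma_univ, sum_sigma, sum_range]
    refine sum_congr rfl fun m _ => ?_
    rw [ih, mul_sum, ← sum_coe_sort]
    refine sum_congr rfl fun p _ => ?_
    simp [geomSeries, symInsertEquiv_symm_apply_coe, Sym.coe_fill, Sym.coe_replicate, mul_comm]

end GeneratingFunctions

section CoeffSeminorm

/-- The `ℓ¹` norm of the coefficients of degree `< N` of a power series. Truncation keeps it finite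
for every series and does not destroy submultiplicativity, so that it bounds the coefficients of
products uniformly in the number of factors. -/
noncomputable def coeffSeminorm (R : Type*) [SeminormedRing R] (N : ℕ) : RingSeminorm R⟦X⟧ where
  toFun f := ∑ i ∈ range N, ‖coeff i f‖
  map_zero' := by simp
  add_le' f g := by
    rw [← sum_add_distrib]
    exact sum_le_sum fun i _ => by simpa using norm_add_le _ _
  neg' f := by simp
  mul_le' f g := by
    calc ∑ i ∈ range N, ‖coeff i (f * g)‖
        ≤ ∑ i ∈ range N, ∑ k ∈ range (i + 1), ‖coeff k f‖ * ‖coeff (i - k) g‖ := by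
          refine sum_le_sum fun i _ => ?_
          rw [coeff_mul, Nat.sum_antidiagonal_eq_sum_range_succ_mk]
          exact norm_sum_le_of_le _ fun k _ => norm_mul_le _ _
      _ = ∑ i ∈ range N, ∑ k ∈ range (N - i), ‖coeff i f‖ * ‖coeff k g‖ :=
          sum_range_diag_flip N fun i k => ‖coeff i f‖ * ‖coeff k g‖
      _ ≤ ∑ i ∈ range N, ∑ k ∈ range N, ‖coeff i f‖ * ‖coeff k g‖ := by
          gcongr
          exact Nat.sub_le _ _
      _ = _ := (sum_mul_sum _ _ _ _).symm

section SeminormedRing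

variable {R : Type*} [SeminormedRing R]

lemma coeffSeminorm_apply (N : ℕ) (f : R⟦X⟧) :
    coeffSeminorm R N f = ∑ i ∈ range N, ‖coeff i f‖ := rfl

lemma norm_coeff_le_coeffSeminorm {N i : ℕ} (hi : i < N) (f : R⟦X⟧) :
    ‖coeff i f‖ ≤ coeffSeminorm R N f :=
  single_le_sum (f := fun i => ‖coeff i f‖) (fun _ _ => norm_nonneg _) (mem_range.2 hi)

lemma coeffSeminorm_C_le (N : ℕ) (a : R) : coeffSeminorm R N (C a) ≤ ‖a‖ := by
  cases N with
  | zero => simp [coeffSeminorm_apply]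
  | succ N => simp [coeffSeminorm_apply, sum_range_succ', coeff_C]

variable [NormOneClass R]

lemma coeffSeminorm_one_le (N : ℕ) : coeffSeminorm R N (1 : R⟦X⟧) ≤ 1 := by
  simpa using coeffSeminorm_C_le N (1 : R)

lemma coeffSeminorm_X_le (N : ℕ) : coeffSeminorm R N (X : R⟦X⟧) ≤ 1 := by
  simp only [coeffSeminorm_apply, coeff_X, apply_ite norm, norm_one, norm_zero, sum_ite_eq']
  split_ifs <;> norm_num

lemma coeffSeminorm_C_mul_X_le (N : ℕ) (a : R) : coeffSeminorm R N (C a * X) ≤ ‖a‖ :=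
  calc coeffSeminorm R N (C a * X) ≤ coeffSeminorm R N (C a) * coeffSeminorm R N X :=
        map_mul_le_mul _ _ _
    _ ≤ ‖a‖ * 1 := by
        gcongr
        exacts [coeffSeminorm_C_le N a, coeffSeminorm_X_le N]
    _ = ‖a‖ := mul_one _

end SeminormedRing

lemma coeffSeminorm_geomSeries_sub_one_le {R : Type*} [SeminormedCommRing R] [NormOneClass R]
    (N : ℕ) {a : R} (ha : ‖a‖ ≤ 1) : coeffSeminorm R N (geomSeries a - 1) ≤ N * ‖a‖ := by
  have h (i : ℕ) : ‖coeff i (geomSeries a - 1)‖ ≤ ‖a‖ := by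
    rcases i with _ | i
    · simp [geomSeries]
    · simpa [geomSeries, coeff_one] using
        (norm_pow_le a (i + 1)).trans (pow_le_of_le_one (norm_nonneg a) ha i.succ_ne_zero)
  rw [coeffSeminorm_apply]
  exact (sum_le_card_nsmul (range N) _ _ fun i _ => h i).trans_eq (by simp)

end CoeffSeminorm

lemma map_prod_le_exp_sum_map_sub_one {ι A : Type*} [CommRing A] (p : RingSeminorm A)
    (hp : p 1 ≤ 1) (s : Finset ι) (f : ι → A) :
    p (∏ i ∈ s, f i) ≤ Real.exp (∑ i ∈ s, p (f i - 1)) := by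
  classical
  induction s using Finset.induction with
  | empty => simpa using hp
  | insert i s hi ih =>
    have hfi : p (f i) ≤ Real.exp (p (f i - 1)) :=
      calc p (f i) = p (f i - 1 + 1) := by rw [sub_add_cancel]
        _ ≤ p (f i - 1) + 1 := (map_add_le_add p _ _).trans (by gcongr)
        _ ≤ Real.exp (p (f i - 1)) := Real.add_one_le_exp _
    rw [prod_insert hi, sum_insert hi, Real.exp_add]
    exact (map_mul_le_mul p _ _).trans (by gcongr)

section WilfZeilberger

variable {E : Type*}

lemma sum_range_sub_sum_range_of_wz [AddCommGroup E] {F G : ℕ → ℕ → E}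
    (h : ∀ n k, F n k - F (n + 1) k = G n k - G n (k + 1)) (M N : ℕ) :
    ∑ k ∈ range M, F 0 k - ∑ k ∈ range M, F N k
      = ∑ n ∈ range N, G n 0 - ∑ n ∈ range N, G n M := by
  calc ∑ k ∈ range M, F 0 k - ∑ k ∈ range M, F N k
      = ∑ k ∈ range M, ∑ n ∈ range N, (F n k - F (n + 1) k) := by
        simp only [sum_range_sub' fun n => F n _, sum_sub_distrib]
    _ = ∑ n ∈ range N, ∑ k ∈ range M, (G n k - G n (k + 1)) := by
        rw [sum_comm]
        simp only [h]
    _ = ∑ n ∈ range N, G n 0 - ∑ n ∈ range N, G n M := by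
        rw [← sum_sub_distrib]
        exact sum_congr rfl fun n _ => sum_range_sub' (G n) M

lemma hasSum_unique_of_wz [AddCommGroup E] [TopologicalSpace E] [IsTopologicalAddGroup E]
    [T2Space E] {F G : ℕ → ℕ → E} {a b : E}
    (h : ∀ n k, F n k - F (n + 1) k = G n k - G n (k + 1))
    (hF : Tendsto (fun N => ∑ k ∈ range N, F N k) atTop (𝓝 0))
    (hG : Tendsto (fun N => ∑ n ∈ range N, G n N) atTop (𝓝 0))
    (ha : HasSum (F 0) a) (hb : HasSum (fun n => G n 0) b) : a = b := by
  have hleft := ha.tendsto_sum_nat.sub hF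
  have hright := hb.tendsto_sum_nat.sub hG
  simp only [sub_zero] at hleft hright
  exact tendsto_nhds_unique hleft
    (hright.congr fun N => (sum_range_sub_sum_range_of_wz h N N).symm)

lemma tendsto_sum_range_zero_of_norm_le_div_sq [SeminormedAddCommGroup E] {u : ℕ → ℕ → E} {A : ℝ}
    (h : ∀ N i, ‖u N i‖ ≤ A / ((N : ℝ) + 1) ^ 2) :
    Tendsto (fun N => ∑ i ∈ range N, u N i) atTop (𝓝 0) := by
  have hA : 0 ≤ A := by simpa using (norm_nonneg _).trans (h 0 0)
  have hlim : Tendsto (fun N : ℕ => A * (1 / ((N : ℝ) + 1))) atTop (𝓝 0) := by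
    simpa using tendsto_one_div_add_atTop_nhds_zero_nat.const_mul A
  refine squeeze_zero_norm (fun N => ?_) hlim
  calc ‖∑ i ∈ range N, u N i‖ ≤ ∑ _i ∈ range N, A / ((N : ℝ) + 1) ^ 2 :=
        norm_sum_le_of_le _ fun i _ => h N i
    _ = N * (A / ((N : ℝ) + 1) ^ 2) := by simp
    _ ≤ (N + 1) * (A / ((N : ℝ) + 1) ^ 2) := by gcongr; linarith
    _ = A * (1 / ((N : ℝ) + 1)) := by field_simp

end WilfZeilberger

section SymKernel

/-- The variables `1/1², 1/2², …` of the symmetric functions, indexed from `0` as in `esym`. -/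
noncomputable def invSq (j : ℕ) : ℝ := 1 / ((j : ℝ) + 1) ^ 2

lemma invSq_nonneg (j : ℕ) : 0 ≤ invSq j := by
  unfold invSq
  positivity

lemma invSq_le_one (j : ℕ) : invSq j ≤ 1 :=
  div_le_one_of_le₀ (one_le_pow₀ (by simp)) (by positivity)

lemma C_succ_sq_mul_C_invSq (j : ℕ) : (C (((j : ℝ) + 1) ^ 2) : ℝ⟦X⟧) * C (invSq j) = 1 := by
  rw [← map_mul, invSq, mul_one_div_cancel (by positivity), map_one]

lemma summable_invSq : Summable invSq := by
  unfold invSq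
  simpa using
    (summable_nat_add_iff 1).2 (Real.summable_one_div_nat_pow.2 one_lt_two)

/-- The generating function `∏_{j ∈ s} (1 - 4X/(j+1)²) · ∏_{j ∈ t} (1 - X/(j+1)²)⁻²`. Its
coefficients for `s = t = {0, …, k-2}` are the sums `∑ᵢ (-4)ⁱ eᵢ(k) g_{r-i}(k)`; the WZ pair needs
two different index sets. -/
noncomputable def symKernel (s t : Finset ℕ) : ℝ⟦X⟧ :=
  (∏ j ∈ s, (1 + C (-4 * invSq j) * X)) * (∏ j ∈ t, geomSeries (invSq j)) ^ 2

lemma hsym_eq_sum_prod_map_invSq (r k : ℕ) :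
    hsym r k = ∑ m ∈ (range (k - 1)).sym r, ((m : Multiset ℕ).map invSq).prod := by
  -- In `hsym` the bound variable `j` is real: the cast acts on the multiset, as a monadic map.
  simp only [hsym, Multiset.bind_def, Multiset.pure_def, Multiset.bind_singleton,
    Multiset.map_map]
  rfl

lemma coeff_symKernel_range (r k : ℕ) :
    coeff r (symKernel (range k) (range k)) =
      ∑ i ∈ range (r + 1), (-4 : ℝ) ^ i * esym i (k + 1) * gsym (r - i) (k + 1) := by
  have hesym (i : ℕ) : coeff i (∏ j ∈ range k, (1 + C (-4 * invSq j) * X))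
      = (-4 : ℝ) ^ i * esym i (k + 1) := by
    rw [coeff_prod_one_add_C_mul_X, esym, mul_sum]
    refine sum_congr rfl fun S hS => ?_
    rw [prod_mul_distrib, prod_const, (mem_powersetCard.1 hS).2]
    rfl
  have hgsym (i : ℕ) : coeff i ((∏ j ∈ range k, geomSeries (invSq j)) ^ 2) = gsym i (k + 1) := by
    rw [sq, coeff_mul, Nat.sum_antidiagonal_eq_sum_range_succ_mk]
    simp only [coeff_prod_geomSeries, gsym, hsym_eq_sum_prod_map_invSq, Nat.add_sub_cancel]
  simp only [symKernel, coeff_mul, Nat.sum_antidiagonal_eq_sum_range_succ_mk, hesym, hgsym]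

lemma succ_sq_mul_symKernel_range_succ (n : ℕ) (t : Finset ℕ) :
    ((n : ℝ⟦X⟧) + 1) ^ 2 * symKernel (range (n + 1)) t
      = (((n : ℝ⟦X⟧) + 1) ^ 2 - 4 * X) * symKernel (range n) t := by
  have hinv := C_succ_sq_mul_C_invSq n
  simp only [symKernel, prod_range_succ, map_mul, map_neg, map_ofNat, map_pow, map_add,
    map_natCast, map_one] at hinv ⊢
  linear_combination (-4 * X * (∏ i ∈ range n, (1 + -4 * C (invSq i) * X)) *
    (∏ i ∈ t, geomSeries (invSq i)) ^ 2) * hinv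

lemma symKernel_insert_right {j : ℕ} {t : Finset ℕ} (hj : j ∉ t) (s : Finset ℕ) :
    symKernel s (insert j t) = geomSeries (invSq j) ^ 2 * symKernel s t := by
  rw [symKernel, symKernel, prod_insert hj]
  ring

lemma sq_sub_X_mul_geomSeries_invSq (j : ℕ) :
    (((j : ℝ⟦X⟧) + 1) ^ 2 - X) * geomSeries (invSq j) = ((j : ℝ⟦X⟧) + 1) ^ 2 := by
  have hgeom := geomSeries_mul_one_sub (invSq j)
  have hinv := C_succ_sq_mul_C_invSq j
  simp only [map_pow, map_add, map_natCast, map_one] at hinv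
  linear_combination ((j : ℝ⟦X⟧) + 1) ^ 2 * hgeom + X * geomSeries (invSq j) * hinv

lemma sq_sub_X_sq_mul_symKernel_insert_right {j : ℕ} {t : Finset ℕ} (hj : j ∉ t)
    (s : Finset ℕ) :
    (((j : ℝ⟦X⟧) + 1) ^ 2 - X) ^ 2 * symKernel s (insert j t)
      = ((j : ℝ⟦X⟧) + 1) ^ 4 * symKernel s t := by
  rw [symKernel_insert_right hj, ← mul_assoc, ← mul_pow, sq_sub_X_mul_geomSeries_invSq]
  ring

lemma sq_sub_X_sq_mul_symKernel_Ico_succ_right {a b : ℕ} (hab : a ≤ b) (s : Finset ℕ) :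
    (((b : ℝ⟦X⟧) + 1) ^ 2 - X) ^ 2 * symKernel s (Ico a (b + 1))
      = ((b : ℝ⟦X⟧) + 1) ^ 4 * symKernel s (Ico a b) := by
  rw [← insert_Ico_right_eq_Ico_add_one hab, sq_sub_X_sq_mul_symKernel_insert_right (by simp)]

lemma sq_sub_X_sq_mul_symKernel_Ico {a b : ℕ} (hab : a < b) (s : Finset ℕ) :
    (((a : ℝ⟦X⟧) + 1) ^ 2 - X) ^ 2 * symKernel s (Ico a b)
      = ((a : ℝ⟦X⟧) + 1) ^ 4 * symKernel s (Ico (a + 1) b) := by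
  rw [← insert_Ico_add_one_left_eq_Ico hab, sq_sub_X_sq_mul_symKernel_insert_right (by simp)]

lemma exists_coeffSeminorm_symKernel_le (N : ℕ) :
    ∃ B, ∀ s t, coeffSeminorm ℝ N (symKernel s t) ≤ B := by
  have hsum (c : ℝ) (hc : 0 ≤ c) (s : Finset ℕ) : ∑ j ∈ s, c * invSq j ≤ c * ∑' j, invSq j := by
    rw [← mul_sum]
    gcongr
    exact summable_invSq.sum_le_tsum s fun j _ => invSq_nonneg j
  have hlin (s : Finset ℕ) : coeffSeminorm ℝ N (∏ j ∈ s, (1 + C (-4 * invSq j) * X))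
      ≤ Real.exp (4 * ∑' j, invSq j) := by
    refine (map_prod_le_exp_sum_map_sub_one _ (coeffSeminorm_one_le N) s _).trans
      (Real.exp_le_exp.2 ((sum_le_sum fun j _ => ?_).trans (hsum 4 (by norm_num) s)))
    rw [add_sub_cancel_left]
    exact (coeffSeminorm_C_mul_X_le N _).trans_eq (by simp [abs_of_nonneg (invSq_nonneg j)])
  have hgeom (t : Finset ℕ) : coeffSeminorm ℝ N (∏ j ∈ t, geomSeries (invSq j))
      ≤ Real.exp (N * ∑' j, invSq j) := by
    refine (map_prod_le_exp_sum_map_sub_one _ (coeffSeminorm_one_le N) t _).trans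
      (Real.exp_le_exp.2 ((sum_le_sum fun j _ => ?_).trans (hsum N N.cast_nonneg t)))
    have hj : ‖invSq j‖ = invSq j := Real.norm_of_nonneg (invSq_nonneg j)
    simpa only [hj] using coeffSeminorm_geomSeries_sub_one_le N (hj.trans_le (invSq_le_one j))
  refine ⟨Real.exp (4 * ∑' j, invSq j) * Real.exp (N * ∑' j, invSq j) ^ 2, fun s t => ?_⟩
  calc coeffSeminorm ℝ N (symKernel s t)
      ≤ coeffSeminorm ℝ N (∏ j ∈ s, (1 + C (-4 * invSq j) * X)) *
          coeffSeminorm ℝ N (∏ j ∈ t, geomSeries (invSq j)) ^ 2 := by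
        rw [symKernel, sq, sq]
        refine (map_mul_le_mul _ _ _).trans ?_
        gcongr
        exact map_mul_le_mul _ _ _
    _ ≤ _ := by
        gcongr
        exacts [hlin s, hgeom t]

end SymKernel

section WZPair

/-- The scalar `(-1)ⁿ / (C(2n,n) ((n+k+1) C(n+k,k))⁴) = (-1)ⁿ n!⁶ k!⁴ / ((2n)! (n+k+1)!⁴)` common to
the two members of the WZ pair. -/
noncomputable def wzScalar (n k : ℕ) : ℝ :=
  (-1) ^ n / (n.centralBinom * (((n : ℝ) + k + 1) * (n + k).choose k) ^ 4)

/-- The first member of the WZ pair. With `K = k + 1` it equals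
`(-1)ⁿ n!⁶/(2n)! · (n + 2K) · ∏_{m ≤ n} (1 - 4X/m²) / ∏_{j=K}^{K+n} (j² - X)²`. -/
noncomputable def wzF (n k : ℕ) : ℝ⟦X⟧ :=
  C (wzScalar n k * (n + 2 * (k + 1))) * symKernel (range n) (Ico k (k + n + 1))

/-- The second member of the WZ pair: with `K = k + 1`, the factor `n + 2K` of `wzF n k` is replaced
by `(2K² + (6n + 2)K + 5n² + 4n + 1 - 2X) / (2(2n + 1))`. -/
noncomputable def wzG (n k : ℕ) : ℝ⟦X⟧ :=
  C (wzScalar n k / (2 * (2 * n + 1))) *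
    (C (2 * ((k : ℝ) + 1) ^ 2 + (6 * n + 2) * (k + 1) + 5 * n ^ 2 + 4 * n + 1) - 2 * X) *
    symKernel (range n) (Ico k (k + n + 1))

lemma wzScalar_succ_left (n k : ℕ) :
    wzScalar (n + 1) k * (2 * (2 * n + 1) * ((n : ℝ) + k + 2) ^ 4)
      = -((n : ℝ) + 1) ^ 5 * wzScalar n k := by
  have hcentral : ((n : ℝ) + 1) * (n + 1).centralBinom = 2 * (2 * n + 1) * n.centralBinom := by
    exact_mod_cast n.succ_mul_centralBinom_succ
  have hchoose : ((n + k).choose k : ℝ) * (n + k + 1) = (n + 1 + k).choose k * (n + 1) := by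
    have h := (n + k).choose_mul_succ_eq k
    rw [show n + k + 1 - k = n + 1 by omega, show n + k + 1 = n + 1 + k by omega] at h
    have h' : ((n + k).choose k : ℝ) * (n + 1 + k) = (n + 1 + k).choose k * (n + 1) := by
      exact_mod_cast h
    linear_combination h'
  have hc : ((n + 1).centralBinom : ℝ) = 2 * (2 * n + 1) * n.centralBinom / (n + 1) := by
    rw [← hcentral]; field_simp
  have hd : ((n + 1 + k).choose k : ℝ) = (n + k).choose k * (n + k + 1) / (n + 1) := by
    rw [hchoose]; field_simp
  have h0 : (n.centralBinom : ℝ) ≠ 0 := by exact_mod_cast n.centralBinom_ne_zero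
  have h1 : ((n + k).choose k : ℝ) ≠ 0 := by
    exact_mod_cast (Nat.choose_pos (Nat.le_add_left k n)).ne'
  have h2 : (n : ℝ) + k + 1 ≠ 0 := by positivity
  have h3 : (n : ℝ) + k + 2 ≠ 0 := by positivity
  unfold wzScalar
  rw [hc, hd]
  push_cast
  rw [show (n : ℝ) + 1 + k + 1 = n + k + 2 by ring]
  field_simp
  ring

lemma wzScalar_succ_right (n k : ℕ) :
    wzScalar n (k + 1) * ((n : ℝ) + k + 2) ^ 4 = ((k : ℝ) + 1) ^ 4 * wzScalar n k := by
  have hchoose : ((n : ℝ) + k + 1) * (n + k).choose k = (n + (k + 1)).choose (k + 1) * (k + 1) := by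
    exact_mod_cast (n + k).add_one_mul_choose_eq k
  have h1 : ((n + (k + 1)).choose (k + 1) : ℝ) ≠ 0 := by
    exact_mod_cast (Nat.choose_pos (Nat.le_add_left (k + 1) n)).ne'
  have h3 : (n : ℝ) + k + 2 ≠ 0 := by positivity
  unfold wzScalar
  rw [hchoose]
  push_cast
  rw [show (n : ℝ) + (k + 1) + 1 = n + k + 2 by ring]
  field_simp

/-- Common denominators turn the WZ relation into this identity; `N`, `K`, `x` stand for `n`,
`k + 1` and `X`. -/
lemma wz_polynomial_identity {R : Type*} [CommRing R] (N K x : R) :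
    2 * (2 * N + 1) * (N + 2 * K) * ((N + K + 1) ^ 2 - x) ^ 2
        + (N + 1) ^ 3 * (N + 1 + 2 * K) * ((N + 1) ^ 2 - 4 * x)
      = (2 * K ^ 2 + (6 * N + 2) * K + 5 * N ^ 2 + 4 * N + 1 - 2 * x) * ((N + K + 1) ^ 2 - x) ^ 2
        - (2 * (K + 1) ^ 2 + (6 * N + 2) * (K + 1) + 5 * N ^ 2 + 4 * N + 1 - 2 * x)
          * (K ^ 2 - x) ^ 2 := by
  ring

lemma exists_wzScalar_eq_mul (n k : ℕ) : ∃ c : ℝ,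
    wzScalar n k = 2 * (2 * n + 1) * ((n : ℝ) + k + 2) ^ 4 * c ∧
    wzScalar (n + 1) k = -((n : ℝ) + 1) ^ 5 * c ∧
    wzScalar n (k + 1) = 2 * (2 * n + 1) * ((k : ℝ) + 1) ^ 4 * c := by
  have hpos : (n : ℝ) + k + 2 ≠ 0 := by positivity
  refine ⟨wzScalar n k / (2 * (2 * n + 1) * ((n : ℝ) + k + 2) ^ 4), by field_simp, ?_, ?_⟩
  · field_simp
    linear_combination wzScalar_succ_left n k
  · field_simp
    linear_combination wzScalar_succ_right n k

lemma wzF_sub_wzF_succ (n k : ℕ) : wzF n k - wzF (n + 1) k = wzG n k - wzG n (k + 1) := by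
  obtain ⟨c, hc, hc_left, hc_right⟩ := exists_wzScalar_eq_mul n k
  have htop := sq_sub_X_sq_mul_symKernel_Ico_succ_right (by omega : k ≤ k + n + 1) (range n)
  have hbot := sq_sub_X_sq_mul_symKernel_Ico (by omega : k < k + n + 1 + 1) (range n)
  have hrange := succ_sq_mul_symKernel_range_succ n (Ico k (k + n + 1 + 1))
  have hdiv (x : ℝ) : 2 * (2 * (n : ℝ) + 1) * x * c / (2 * (2 * n + 1)) = x * c := by field_simp
  rw [wzF, wzF, wzG, wzG, hc, hc_left, hc_right, hdiv, hdiv, ← add_assoc k n 1,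
    add_right_comm k 1 n]
  simp only [map_add, map_mul, map_pow, map_neg, map_natCast, map_ofNat, map_one, Nat.cast_add,
    Nat.cast_one] at htop ⊢
  linear_combination C c * (
    -(2 * (2 * (n : ℝ⟦X⟧) + 1) * (n + 2 * (k + 1))) * htop
    + ((n : ℝ⟦X⟧) + 1) ^ 3 * (n + 1 + 2 * (k + 1)) * hrange
    + (2 * ((k : ℝ⟦X⟧) + 1) ^ 2 + (6 * n + 2) * (k + 1) + 5 * n ^ 2 + 4 * n + 1 - 2 * X) * htop
    - (2 * ((k : ℝ⟦X⟧) + 1 + 1) ^ 2 + (6 * n + 2) * (k + 1 + 1) + 5 * n ^ 2 + 4 * n + 1 - 2 * X)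
      * hbot
    + symKernel (range n) (Ico k (k + n + 1 + 1)) * wz_polynomial_identity (n : ℝ⟦X⟧) (k + 1) X)

lemma abs_wzScalar_le (n k : ℕ) : |wzScalar n k| ≤ 1 / ((n : ℝ) + k + 1) ^ 4 := by
  have hcentral : (1 : ℝ) ≤ n.centralBinom := by exact_mod_cast n.centralBinom_pos
  have hchoose : (1 : ℝ) ≤ (n + k).choose k := by
    exact_mod_cast Nat.choose_pos (Nat.le_add_left k n)
  rw [wzScalar, abs_div, abs_neg_one_pow, abs_of_nonneg (by positivity)]
  gcongr
  calc ((n : ℝ) + k + 1) ^ 4 = 1 * (((n : ℝ) + k + 1) * 1) ^ 4 := by ring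
    _ ≤ _ := by gcongr

lemma exists_norm_coeff_wzF_le (p : ℕ) :
    ∃ A, ∀ n k, ‖coeff p (wzF n k)‖ ≤ A / ((n : ℝ) + k + 1) ^ 2 := by
  obtain ⟨B, hB⟩ := exists_coeffSeminorm_symKernel_le (p + 1)
  refine ⟨2 * B, fun n k => ?_⟩
  have hn : (0 : ℝ) ≤ n := n.cast_nonneg
  have hk : (0 : ℝ) ≤ k := k.cast_nonneg
  calc ‖coeff p (wzF n k)‖
      = |wzScalar n k| * ((n : ℝ) + 2 * (k + 1)) *
          ‖coeff p (symKernel (range n) (Ico k (k + n + 1)))‖ := by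
        rw [wzF, coeff_C_mul, norm_mul, norm_mul, Real.norm_eq_abs,
          Real.norm_of_nonneg (by positivity)]
    _ ≤ 1 / ((n : ℝ) + k + 1) ^ 4 * (2 * (n + k + 1) ^ 2) * B := by
        gcongr
        · exact abs_wzScalar_le n k
        · nlinarith only [hn, hk]
        · exact (norm_coeff_le_coeffSeminorm p.lt_succ_self _).trans (hB _ _)
    _ = 2 * B / ((n : ℝ) + k + 1) ^ 2 := by field_simp

lemma exists_norm_coeff_wzG_le (p : ℕ) :
    ∃ A, ∀ n k, ‖coeff p (wzG n k)‖ ≤ A / ((n : ℝ) + k + 1) ^ 2 := by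
  obtain ⟨B, hB⟩ := exists_coeffSeminorm_symKernel_le (p + 1)
  refine ⟨7 * B, fun n k => ?_⟩
  have hn : (0 : ℝ) ≤ n := n.cast_nonneg
  have hk : (0 : ℝ) ≤ k := k.cast_nonneg
  set q : ℝ := 2 * ((k : ℝ) + 1) ^ 2 + (6 * n + 2) * (k + 1) + 5 * n ^ 2 + 4 * n + 1 with hq
  have hfactor : coeffSeminorm ℝ (p + 1) (C q - 2 * X) ≤ 7 * ((n : ℝ) + k + 1) ^ 2 :=
    calc coeffSeminorm ℝ (p + 1) (C q - 2 * X)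
        ≤ coeffSeminorm ℝ (p + 1) (C q) + coeffSeminorm ℝ (p + 1) (C 2 * X) := by
          rw [map_ofNat]
          exact map_sub_le_add _ _ _
      _ ≤ ‖q‖ + ‖(2 : ℝ)‖ := add_le_add (coeffSeminorm_C_le _ _) (coeffSeminorm_C_mul_X_le _ _)
      _ ≤ 7 * ((n : ℝ) + k + 1) ^ 2 := by
          rw [Real.norm_of_nonneg (by positivity), Real.norm_of_nonneg (by norm_num), hq]
          nlinarith [mul_nonneg hn hk]
  have hscalar : |wzScalar n k / (2 * (2 * n + 1))| ≤ 1 / ((n : ℝ) + k + 1) ^ 4 := by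
    rw [abs_div, abs_of_nonneg (by positivity : (0 : ℝ) ≤ 2 * (2 * n + 1))]
    exact (div_le_self (abs_nonneg _) (by linarith)).trans (abs_wzScalar_le n k)
  calc ‖coeff p (wzG n k)‖
      ≤ |wzScalar n k / (2 * (2 * n + 1))| * (coeffSeminorm ℝ (p + 1) (C q - 2 * X) *
          coeffSeminorm ℝ (p + 1) (symKernel (range n) (Ico k (k + n + 1)))) := by
        rw [wzG, mul_assoc, coeff_C_mul, norm_mul, Real.norm_eq_abs]
        gcongr
        exact (norm_coeff_le_coeffSeminorm p.lt_succ_self _).trans (map_mul_le_mul _ _ _)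
    _ ≤ 1 / ((n : ℝ) + k + 1) ^ 4 * (7 * ((n : ℝ) + k + 1) ^ 2 * B) := by
        gcongr
        exact hB _ _
    _ = 7 * B / ((n : ℝ) + k + 1) ^ 2 := by field_simp

lemma coeff_wzF_zero (p k : ℕ) :
    coeff p (wzF 0 k) = (2 * (p : ℝ) + 2) * (1 / ((k : ℝ) + 1) ^ (2 * p + 3)) := by
  simp only [wzF, wzScalar, symKernel, range_zero, prod_empty, one_mul, add_zero,
    Nat.Ico_succ_singleton, prod_singleton, geomSeries_sq, coeff_C_mul, coeff_mk, invSq, zero_add,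
    Nat.choose_self, Nat.centralBinom_zero]
  push_cast
  rw [div_pow, one_pow, ← pow_mul]
  field_simp
  ring

lemma wzG_zero_right (m : ℕ) :
    wzG m 0 = C ((-1) ^ m / (((m : ℝ) + 1) ^ 3 * (m + 1).centralBinom)) *
      ((mk fun j => (3 * (j : ℝ) + 5) * invSq m ^ j) * symKernel (range m) (range m)) := by
  have hscalar : (-1) ^ m / (((m : ℝ) + 1) ^ 3 * (m + 1).centralBinom)
      = wzScalar m 0 / (2 * (2 * m + 1)) * (m + 1) ^ 2 := by
    have h : ((m : ℝ) + 1) * (m + 1).centralBinom = 2 * (2 * m + 1) * m.centralBinom := by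
      exact_mod_cast m.succ_mul_centralBinom_succ
    have hpos : (0 : ℝ) < (m + 1).centralBinom := by exact_mod_cast (m + 1).centralBinom_pos
    have hpos' : (0 : ℝ) < m.centralBinom := by exact_mod_cast m.centralBinom_pos
    simp only [wzScalar, Nat.cast_zero, add_zero, Nat.choose_zero_right, Nat.cast_one, mul_one]
    field_simp
    linear_combination -h
  have hkernel : symKernel (range m) (Ico 0 (0 + m + 1))
      = geomSeries (invSq m) ^ 2 * symKernel (range m) (range m) := by
    rw [zero_add, ← range_eq_Ico, range_add_one, symKernel_insert_right (by simp)]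
  have hinv := C_succ_sq_mul_C_invSq m
  rw [wzG, hkernel, hscalar, ← five_sub_two_mul_geomSeries_sq]
  simp only [map_add, map_mul, map_pow, map_natCast, map_ofNat, map_one, map_zero,
    Nat.cast_zero] at hinv ⊢
  linear_combination (2 * C (wzScalar m 0 / (2 * (2 * m + 1))) * X *
    geomSeries (invSq m) ^ 2 * symKernel (range m) (range m)) * hinv

lemma coeff_wzG_zero_right (p k : ℕ) :
    coeff p (wzG k 0) = ∑ j ∈ range (p + 1), (3 * (j : ℝ) + 5) *
      ((-1) ^ k / (((k : ℝ) + 1) ^ (2 * j + 3) * (2 * (k + 1)).choose (k + 1)) *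
        coeff (p - j) (symKernel (range k) (range k))) := by
  rw [wzG_zero_right, coeff_C_mul, coeff_mul, Nat.sum_antidiagonal_eq_sum_range_succ_mk, mul_sum]
  refine sum_congr rfl fun j _ => ?_
  rw [coeff_mk, invSq, div_pow, one_pow, ← pow_mul, pow_add, Nat.centralBinom]
  field_simp

lemma summable_div_centralBinom_mul_coeff_symKernel (j r : ℕ) : Summable fun k : ℕ =>
    (-1 : ℝ) ^ k / (((k : ℝ) + 1) ^ (2 * j + 3) * (2 * (k + 1)).choose (k + 1)) *
      coeff r (symKernel (range k) (range k)) := by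
  obtain ⟨B, hB⟩ := exists_coeffSeminorm_symKernel_le (r + 1)
  refine .of_norm_bounded (summable_invSq.mul_right B) fun k => ?_
  have hchoose : (1 : ℝ) ≤ (2 * (k + 1)).choose (k + 1) := by
    exact_mod_cast (k + 1).centralBinom_pos
  have hpow : ((k : ℝ) + 1) ^ 2 ≤ (k + 1) ^ (2 * j + 3) := pow_le_pow_right₀ (by simp) (by omega)
  rw [norm_mul, norm_div, norm_pow, norm_neg, norm_one, one_pow,
    Real.norm_of_nonneg (by positivity)]
  gcongr
  · exact invSq_nonneg k
  · rw [invSq]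
    gcongr
    exact hpow.trans (le_mul_of_one_le_right (by positivity) hchoose)
  · exact (norm_coeff_le_coeffSeminorm r.lt_succ_self _).trans (hB _ _)

lemma hasSum_coeff_wzF_zero (p : ℕ) : HasSum (fun k => coeff p (wzF 0 k))
    ((2 * (p : ℝ) + 2) * ∑' k : ℕ, 1 / ((k : ℝ) + 1) ^ (2 * p + 3)) := by
  have hsum : Summable fun k : ℕ => 1 / ((k : ℝ) + 1) ^ (2 * p + 3) := by
    simpa using (summable_nat_add_iff 1).2
      (Real.summable_one_div_nat_pow.2 (by omega : 1 < 2 * p + 3))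
  simpa only [coeff_wzF_zero] using hsum.hasSum.mul_left _

lemma hasSum_coeff_wzG_zero_right (p : ℕ) : HasSum (fun k => coeff p (wzG k 0))
    (∑ j ∈ range (p + 1), (3 * (j : ℝ) + 5) * ∑' k : ℕ,
      (-1) ^ k / (((k : ℝ) + 1) ^ (2 * j + 3) * (2 * (k + 1)).choose (k + 1)) *
        coeff (p - j) (symKernel (range k) (range k))) := by
  simp only [coeff_wzG_zero_right]
  exact hasSum_sum fun j _ =>
    (summable_div_centralBinom_mul_coeff_symKernel j (p - j)).hasSum.mul_left _

lemma tendsto_sum_range_coeff_wzF (p : ℕ) :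
    Tendsto (fun N => ∑ k ∈ range N, coeff p (wzF N k)) atTop (𝓝 0) := by
  obtain ⟨A, hA⟩ := exists_norm_coeff_wzF_le p
  have hA0 : 0 ≤ A := by simpa using (norm_nonneg _).trans (hA 0 0)
  refine tendsto_sum_range_zero_of_norm_le_div_sq (A := A) fun N k => (hA N k).trans ?_
  gcongr
  exact le_add_of_nonneg_right k.cast_nonneg

lemma tendsto_sum_range_coeff_wzG (p : ℕ) :
    Tendsto (fun N => ∑ n ∈ range N, coeff p (wzG n N)) atTop (𝓝 0) := by
  obtain ⟨A, hA⟩ := exists_norm_coeff_wzG_le p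
  have hA0 : 0 ≤ A := by simpa using (norm_nonneg _).trans (hA 0 0)
  refine tendsto_sum_range_zero_of_norm_le_div_sq (A := A) fun N n => (hA n N).trans ?_
  gcongr
  exact le_add_of_nonneg_left n.cast_nonneg

end WZPair

theorem stmt4 (n : ℕ) :
    (∑' k : ℕ, 1 / ((k : ℝ) + 1) ^ (2 * n + 3))
      = (1 / (2 * (n : ℝ) + 2)) *
          ∑ j ∈ Finset.range (n + 1), (3 * (j : ℝ) + 5) *
            ∑' k : ℕ,
              ((-1 : ℝ) ^ k /
                  (((k : ℝ) + 1) ^ (2 * j + 3) *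
                    (Nat.choose (2 * (k + 1)) (k + 1) : ℝ))) *
                ∑ r ∈ Finset.range (n - j + 1),
                  (-4 : ℝ) ^ r * esym r (k + 1) * gsym (n - j - r) (k + 1) := by
  have hwz (m k : ℕ) : coeff n (wzF m k) - coeff n (wzF (m + 1) k)
      = coeff n (wzG m k) - coeff n (wzG m (k + 1)) := by
    simpa only [map_sub] using congrArg (coeff n) (wzF_sub_wzF_succ m k)
  have hsums := hasSum_unique_of_wz hwz (tendsto_sum_range_coeff_wzF n)
    (tendsto_sum_range_coeff_wzG n) (hasSum_coeff_wzF_zero n) (hasSum_coeff_wzG_zero_right n)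
  simp only [← coeff_symKernel_range]
  rw [← hsums, ← mul_assoc, one_div_mul_cancel (by positivity), one_mul]
end

section
/- Let K = ∑_{n=1}^∞ χ(n)/n², where χ(n) is the Legendre symbol (n/3), i.e. χ(n) = 1 if n ≡ 1 (mod 3), χ(n) = −1 if n ≡ 2 (mod 3), and χ(n) = 0 if 3 | n. Then K = ∑_{n=1}^∞ (15n − 4)(−27)^{n−1} / (n³ C(2n, n)² C(3n, n)). -/
/-- The Legendre symbol `(n/3)`: `1` if `n ≡ 1 (mod 3)`, `-1` if `n ≡ 2 (mod 3)`,
`0` if `3 ∣ n`. -/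
def chi3 (n : ℕ) : ℝ := if n % 3 = 1 then 1 else if n % 3 = 2 then -1 else 0

/-- `K = ∑_{n ≥ 1} (n/3) / n²`. -/
noncomputable def Kconst : ℝ := ∑' n : ℕ, chi3 (n + 1) / ((n : ℝ) + 1) ^ 2

/-!
Write `Ω(a)` for the very-well-poised series
`∑ₖ (a + 2k) ∏ᵢ (bᵢ)ₖ / (1 + a - bᵢ)ₖ` with four parameters `b₀, b₁, b₂, b₃`. There is a rational
function `R(a)` such that the summand of `Ω(a)` minus `R(a)` times that of `Ω(a + 1)`, with the same
`bᵢ`, telescopes; hence `Ω(a) = C(a) + R(a) Ω(a + 1)` with `C` rational too. As `a → ∞`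
the ratio `R(a)` tends to `-1/4` and `Ω(a)` grows at most linearly, so iterating the relation
expands `Ω(a)` as the series `∑ₙ R(a) R(a + 1) ⋯ R(a + n - 1) C(a + n)`.

Grouping the terms of `K` in threes gives `K = (3/4) Ω(1)` with `b = (1/3, 1/3, 2/3, 2/3)`, and
for these parameters the expansion is `4/3` times the series in the theorem.
-/

open Filter Asymptotics Finset Polynomial Topology

section Series

lemma tsum_eq_tsum_sum_mul_add {E : Type*} [AddCommGroup E] [UniformSpace E]
    [IsUniformAddGroup E] [CompleteSpace E] [T0Space E] {f : ℕ → E} (hf : Summable f) (m : ℕ)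
    [NeZero m] : ∑' n, f n = ∑' k, ∑ i : Fin m, f (k * m + i) := by
  have hf' : Summable fun p ↦ f ((Nat.divModEquiv m).symm p) :=
    (Nat.divModEquiv m).symm.summable_iff.mpr hf
  rw [← (Nat.divModEquiv m).symm.tsum_eq f, hf'.tsum_prod]
  simp only [tsum_fintype, Nat.divModEquiv_symm_apply]

lemma hasSum_sub_succ_of_summable {G : Type*} [AddCommGroup G] [TopologicalSpace G]
    [IsTopologicalAddGroup G] {f : ℕ → G} (hf : Summable f) :
    HasSum (fun n ↦ f n - f (n + 1)) (f 0) := by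
  obtain ⟨s, hs⟩ := hf
  simpa using hs.sub ((hasSum_nat_add_iff' 1).mpr hs)

lemma hasSum_of_eq_add_mul_succ {R : Type*} [CommRing R] [TopologicalSpace R]
    [IsTopologicalRing R] {c r s : ℕ → R} (hs : ∀ n, s n = c n + r n * s (n + 1))
    (hsum : Summable fun n ↦ (∏ i ∈ range n, r i) * s n) :
    HasSum (fun n ↦ (∏ i ∈ range n, r i) * c n) (s 0) := by
  convert! hasSum_sub_succ_of_summable hsum using 2 with n
  · rw [hs n, prod_range_succ]
    ring
  · simp

lemma summable_succ_mul_prod_range {r : ℕ → ℝ} {ρ : ℝ} (hr : Tendsto r atTop (𝓝 ρ))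
    (hρ : |ρ| < 1) : Summable fun n : ℕ ↦ ((n : ℝ) + 1) * ∏ i ∈ range n, r i := by
  obtain ⟨q, hρq, hq⟩ := exists_between hρ
  have hlim : Tendsto (fun n : ℕ ↦ (2 + 1 * (n : ℝ)) / (1 + 1 * n) * |r n|) atTop (𝓝 |ρ|) := by
    simpa using (tendsto_add_mul_div_add_mul_atTop_nhds (2 : ℝ) 1 1 one_ne_zero).mul hr.abs
  refine summable_of_ratio_norm_eventually_le hq ?_
  filter_upwards [hlim.eventually_le_const hρq] with n hn
  calc ‖((n + 1 : ℕ) + 1 : ℝ) * ∏ i ∈ range (n + 1), r i‖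
      = (2 + 1 * (n : ℝ)) / (1 + 1 * n) * |r n| * ‖((n : ℝ) + 1) * ∏ i ∈ range n, r i‖ := by
        simp only [prod_range_succ, norm_mul, Real.norm_eq_abs, Nat.cast_add_one]
        rw [abs_of_nonneg (by positivity : (0 : ℝ) ≤ n + 1 + 1),
          abs_of_nonneg (by positivity : (0 : ℝ) ≤ n + 1)]
        field_simp
        ring
    _ ≤ q * ‖((n : ℝ) + 1) * ∏ i ∈ range n, r i‖ := by gcongr

end Series

section Pochhammer

lemma ascPochhammer_eval_add_one_mul {S : Type*} [CommSemiring S] (n : ℕ) (x : S) :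
    (ascPochhammer S n).eval (x + 1) * x = (ascPochhammer S n).eval x * (x + n) := by
  rw [← ascPochhammer_succ_eval, ascPochhammer_succ_left, X_mul, eval_mul_X, eval_comp, eval_add,
    eval_X, eval_one]

lemma ascPochhammer_eval_le_eval {S : Type*} [Semiring S] [PartialOrder S] [IsStrictOrderedRing S]
    (n : ℕ) {x y : S} (hx : 0 < x) (hxy : x ≤ y) :
    (ascPochhammer S n).eval x ≤ (ascPochhammer S n).eval y := by
  induction n with
  | zero => simp
  | succ n ih =>
    rw [ascPochhammer_succ_eval, ascPochhammer_succ_eval]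
    have : 0 ≤ (n : S) := n.cast_nonneg
    exact mul_le_mul ih (by gcongr) (by positivity) (ascPochhammer_pos n y (hx.trans_le hxy)).le

lemma ascPochhammer_eval_eq_prod_range {S : Type*} [CommSemiring S] (n : ℕ) (x : S) :
    (ascPochhammer S n).eval x = ∏ j ∈ range n, (x + j) := by
  induction n with
  | zero => simp
  | succ n ih => rw [ascPochhammer_succ_eval, ih, prod_range_succ]

lemma gammaSeq_eq_div_ascPochhammer (x : ℝ) (n : ℕ) : Real.GammaSeq x n =
    (n : ℝ) ^ x * n.factorial / ((ascPochhammer ℝ n).eval x * (x + n)) := by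
  rw [← ascPochhammer_succ_eval, Real.GammaSeq, ascPochhammer_eval_eq_prod_range]

lemma tendsto_ascPochhammer_eval_div_div_rpow {x y : ℝ} (hx : 0 < x) (hy : 0 < y) :
    Tendsto (fun n : ℕ ↦
      (ascPochhammer ℝ n).eval x / (ascPochhammer ℝ n).eval y / (n : ℝ) ^ (x - y))
      atTop (𝓝 (Real.Gamma y / Real.Gamma x)) := by
  have hlim : Tendsto (fun n : ℕ ↦
      Real.GammaSeq y n / Real.GammaSeq x n * ((y + 1 * n) / (x + 1 * n)))
      atTop (𝓝 (Real.Gamma y / Real.Gamma x)) := by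
    simpa using ((Real.GammaSeq_tendsto_Gamma y).div (Real.GammaSeq_tendsto_Gamma x)
      (Real.Gamma_pos_of_pos hx).ne').mul
      (tendsto_add_mul_div_add_mul_atTop_nhds y x (1 : ℝ) one_ne_zero)
  refine hlim.congr' ?_
  filter_upwards [eventually_gt_atTop 0] with n hn
  have hn' : (0 : ℝ) < n := by exact_mod_cast hn
  have hPx := ascPochhammer_pos n x hx
  have hPy := ascPochhammer_pos n y hy
  rw [gammaSeq_eq_div_ascPochhammer, gammaSeq_eq_div_ascPochhammer, Real.rpow_sub hn', one_mul]
  field_simp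

end Pochhammer

section Binomial

lemma centralBinom_succ_eq (m : ℕ) : ((m + 1).centralBinom : ℝ) =
    2 * (2 * m + 1) / (m + 1) * m.centralBinom := by
  have h : ((m : ℝ) + 1) * (m + 1).centralBinom = 2 * (2 * m + 1) * m.centralBinom := by
    exact_mod_cast m.succ_mul_centralBinom_succ
  field_simp
  linear_combination h

lemma choose_three_mul_succ_eq (m : ℕ) : ((3 * (m + 1)).choose (m + 1) : ℝ) =
    3 * (3 * m + 1) * (3 * m + 2) / (2 * (m + 1) * (2 * m + 1)) * (3 * m).choose m := by
  have h1 := Nat.choose_mul_succ_eq (3 * m) m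
  have h2 := Nat.choose_mul_succ_eq (3 * m + 1) m
  have h3 := Nat.add_one_mul_choose_eq (3 * m + 2) m
  rw [show 3 * m + 1 - m = 2 * m + 1 by lia] at h1
  rw [show 3 * m + 1 + 1 - m = 2 * m + 2 by lia] at h2
  rify at h1 h2 h3
  rw [show 3 * (m + 1) = 3 * m + 2 + 1 by ring]
  rw [← div_eq_iff (by positivity)] at h1 h2 h3
  rw [← h3, ← h2, ← h1]
  field_simp
  ring

end Binomial

section Growth

lemma const_isBigO_natCast_rpow {p : ℝ} (hp : 0 ≤ p) (c : ℝ) :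
    (fun _ : ℕ ↦ c) =O[atTop] fun k : ℕ ↦ (k : ℝ) ^ p := by
  refine .of_bound |c| ?_
  filter_upwards [eventually_ge_atTop 1] with k hk
  have hpow : 1 ≤ (k : ℝ) ^ p := Real.one_le_rpow (by exact_mod_cast hk) hp
  exact le_mul_of_one_le_right (abs_nonneg c) (hpow.trans (le_abs_self _))

lemma const_add_mul_isBigO_natCast (c d : ℝ) :
    (fun k : ℕ ↦ c + d * (k : ℝ)) =O[atTop] fun k : ℕ ↦ (k : ℝ) ^ (1 : ℝ) := by
  refine (const_isBigO_natCast_rpow zero_le_one c).add ?_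
  simpa only [Real.rpow_one] using isBigO_const_mul_self d (fun k : ℕ ↦ (k : ℝ)) atTop

end Growth

namespace VeryWellPoised

section Algebra

variable {ι K : Type*} [Fintype ι] [Field K]

/-- The coefficient `∏ᵢ (bᵢ)ₖ / (1 + a - bᵢ)ₖ` of a well-poised hypergeometric series with
parameters `bᵢ`. -/
noncomputable def weight (b : ι → K) (a : K) (k : ℕ) : K :=
  ∏ i, (ascPochhammer K k).eval (b i) / (ascPochhammer K k).eval (1 + a - b i)

/-- The summand of the very-well-poised series: the well-poised coefficient times the factor
`a + 2k`. -/
noncomputable def term (b : ι → K) (a : K) (k : ℕ) : K := (a + 2 * k) * weight b a k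

/-- The parameter excess `1 + 2a - ∑ᵢ bᵢ`, whose positivity is the convergence condition for the
very-well-poised series with four parameters. -/
def excess (b : ι → K) (a : K) : K := 1 + 2 * a - ∑ i, b i

/-- The factor `R(a)` in the contiguous relation `Ω(a) = C(a) + R(a) Ω(a + 1)`. -/
def ratio (b : Fin 4 → K) (a : K) : K :=
  -((1 + a - b 0 - b 1) * (1 + a - b 0 - b 2) * (1 + a - b 0 - b 3) *
      (1 + a - b 1 - b 2) * (1 + a - b 1 - b 3) * (1 + a - b 2 - b 3)) /
    (excess b a * (excess b a + 1) * ∏ i, (1 + a - b i))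

/-- The polynomial in `k` whose product with `weight b a k` is the telescoping certificate of the
contiguous relation; its value at `k = 0` is the inhomogeneous term `C(a)`. -/
def certificate (b : Fin 4 → K) (a k : K) : K :=
  ((k + a - b 3) * (k + 1 + 2 * a - b 0 - b 1 - b 2) +
    (1 + a - b 0 - b 1) * (1 + a - b 0 - b 2) * (1 + a - b 1 - b 2) / (excess b a + 1)) /
  excess b a

@[simp]
lemma weight_zero (b : ι → K) (a : K) : weight b a 0 = 1 := by simp [weight]

lemma weight_succ (b : ι → K) (a : K) (k : ℕ) :
    weight b a (k + 1) = weight b a k * ∏ i, (b i + k) / (1 + a - b i + k) := by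
  simp only [weight, ascPochhammer_succ_eval, mul_div_mul_comm, prod_mul_distrib]

lemma weight_add_one {b : ι → K} {a : K} (h : ∀ i, 1 + a - b i ≠ 0) (k : ℕ) :
    weight b (a + 1) k = weight b a k * ∏ i, (1 + a - b i) / (1 + a - b i + k) := by
  rw [weight, weight, ← prod_mul_distrib]
  refine prod_congr rfl fun i _ ↦ ?_
  have hP := ascPochhammer_eval_add_one_mul k (1 + a - b i)
  rw [show 1 + (a + 1) - b i = 1 + a - b i + 1 by ring, eq_div_of_mul_eq (h i) hP,
    div_div_eq_mul_div, div_mul_div_comm]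

-- Applied with `yᵢ = 1 + a - bᵢ + k` and `s = a + 1 + 2k`, so that `s - yᵢ = bᵢ + k`.
lemma mul_prod_sub_prod_sub_eq {R : Type*} [CommRing R] (s y₀ y₁ y₂ y₃ : R) :
    (y₃ * (y₀ + y₁ + y₂ - s) * (y₀ + y₁ + y₂ + y₃ - 2 * s) +
        (y₀ + y₁ - s) * (y₀ + y₂ - s) * (y₁ + y₂ - s)) *
      (y₀ * y₁ * y₂ * y₃ - (s - y₀) * (s - y₁) * (s - y₂) * (s - y₃)) =
    s * ((y₀ + y₁ + y₂ + y₃ - 2 * s) ^ 2 * (y₀ * y₁ * y₂ * y₃) +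
      (y₀ + y₁ - s) * (y₀ + y₂ - s) * (y₀ + y₃ - s) *
        (y₁ + y₂ - s) * (y₁ + y₃ - s) * (y₂ + y₃ - s)) := by
  ring

lemma add_two_mul_sub_ratio_mul {b : Fin 4 → K} {a k : K} (hy : ∀ i, 1 + a - b i ≠ 0)
    (hk : ∀ i, 1 + a - b i + k ≠ 0) (he : excess b a ≠ 0) (he' : excess b a + 1 ≠ 0) :
    a + 2 * k - ratio b a * ((a + 1 + 2 * k) * ∏ i, (1 + a - b i) / (1 + a - b i + k)) =
      certificate b a k - certificate b a (k + 1) * ∏ i, (b i + k) / (1 + a - b i + k) := by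
  have hprod : ∏ i, (1 + a - b i) ≠ 0 := prod_ne_zero_iff.mpr fun i _ ↦ hy i
  have hprod' : ∏ i, (1 + a - b i + k) ≠ 0 := prod_ne_zero_iff.mpr fun i _ ↦ hk i
  simp only [ratio, certificate, prod_div_distrib]
  field_simp
  obtain ⟨y, rfl⟩ : ∃ y : Fin 4 → K, b = fun i ↦ 1 + a + k - y i :=
    ⟨fun i ↦ 1 + a + k - b i, by simp⟩
  obtain ⟨s, rfl⟩ : ∃ s, a = s - 1 - 2 * k := ⟨a + 1 + 2 * k, by ring⟩
  simp only [excess, Fin.sum_univ_four, Fin.prod_univ_four]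
  linear_combination -mul_prod_sub_prod_sub_eq s (y 0) (y 1) (y 2) (y 3)

lemma term_sub_ratio_mul_term {b : Fin 4 → K} {a : K} {k : ℕ} (hy : ∀ i, 1 + a - b i ≠ 0)
    (hk : ∀ i, 1 + a - b i + k ≠ 0) (he : excess b a ≠ 0) (he' : excess b a + 1 ≠ 0) :
    term b a k - ratio b a * term b (a + 1) k =
      certificate b a k * weight b a k - certificate b a (k + 1) * weight b a (k + 1) := by
  rw [term, term, weight_add_one hy, weight_succ]
  linear_combination weight b a k * add_two_mul_sub_ratio_mul hy hk he he'

lemma excess_add (b : ι → K) (a t : K) : excess b (a + t) = excess b a + 2 * t := by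
  simp only [excess]
  ring

end Algebra

section Analysis

/-- The very-well-poised series `Ω(a) = ∑ₖ (a + 2k) ∏ᵢ (bᵢ)ₖ / (1 + a - bᵢ)ₖ`. -/
noncomputable def series {ι : Type*} [Fintype ι] (b : ι → ℝ) (a : ℝ) : ℝ := ∑' k, term b a k

section Weight

variable {ι : Type*} [Fintype ι] {b : ι → ℝ} {a : ℝ}

lemma weight_nonneg (hb : ∀ i, 0 < b i) (hba : ∀ i, b i < 1 + a) (k : ℕ) : 0 ≤ weight b a k :=
  prod_nonneg fun i _ ↦ div_nonneg (ascPochhammer_pos k _ (hb i)).le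
    (ascPochhammer_pos k _ (sub_pos.mpr (hba i))).le

lemma weight_le_weight (hb : ∀ i, 0 < b i) (hba : ∀ i, b i < 1 + a) {a' : ℝ} (ha : a ≤ a')
    (k : ℕ) : weight b a' k ≤ weight b a k := by
  have hy : ∀ i, 0 < 1 + a - b i := fun i ↦ sub_pos.mpr (hba i)
  have hyy' : ∀ i, 1 + a - b i ≤ 1 + a' - b i := fun i ↦ by gcongr
  refine prod_le_prod (fun i _ ↦ ?_) fun i _ ↦ ?_
  · exact div_nonneg (ascPochhammer_pos k _ (hb i)).le
      (ascPochhammer_pos k _ ((hy i).trans_le (hyy' i))).le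
  · exact div_le_div_of_nonneg_left (ascPochhammer_pos k _ (hb i)).le
      (ascPochhammer_pos k _ (hy i)) (ascPochhammer_eval_le_eval k (hy i) (hyy' i))

lemma weight_isBigO (hb : ∀ i, 0 < b i) (hba : ∀ i, b i < 1 + a) :
    weight b a =O[atTop] fun k : ℕ ↦ (k : ℝ) ^ ∑ i, (b i - (1 + a - b i)) := by
  have hfactor : ∀ i, (fun k : ℕ ↦
      (ascPochhammer ℝ k).eval (b i) / (ascPochhammer ℝ k).eval (1 + a - b i)) =O[atTop]
        fun k : ℕ ↦ (k : ℝ) ^ (b i - (1 + a - b i)) := fun i ↦ by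
    refine isBigO_of_div_tendsto_nhds ?_ _
      (tendsto_ascPochhammer_eval_div_div_rpow (hb i) (sub_pos.mpr (hba i)))
    filter_upwards [eventually_gt_atTop 0] with k hk h0
    exact absurd h0 (by positivity)
  have hprod := IsBigO.finsetProd (s := univ) fun i _ ↦ hfactor i
  refine hprod.congr' (.of_eq rfl) ?_
  filter_upwards [eventually_gt_atTop 0] with k hk
  exact (Real.rpow_sum_of_pos (by exact_mod_cast hk) _ _).symm

end Weight

variable {b : Fin 4 → ℝ} {a : ℝ}

lemma mul_weight_isBigO (hb : ∀ i, 0 < b i) (hba : ∀ i, b i < 1 + a) {f : ℕ → ℝ} {p : ℝ}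
    (hf : f =O[atTop] fun k : ℕ ↦ (k : ℝ) ^ p) :
    (fun k ↦ f k * weight b a k) =O[atTop]
      fun k : ℕ ↦ (k : ℝ) ^ (p - 2 * (excess b a + 1)) := by
  refine (hf.mul (weight_isBigO hb hba)).congr' (.of_eq rfl) ?_
  filter_upwards [eventually_gt_atTop 0] with k hk
  rw [← Real.rpow_add (by exact_mod_cast hk)]
  simp only [excess, Fin.sum_univ_four]
  ring_nf

lemma summable_mul_weight (hb : ∀ i, 0 < b i) (hba : ∀ i, b i < 1 + a) (he : 0 < excess b a)
    {f : ℕ → ℝ} (hf : f =O[atTop] fun k : ℕ ↦ (k : ℝ) ^ (1 : ℝ)) :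
    Summable fun k ↦ f k * weight b a k :=
  summable_of_isBigO_nat (Real.summable_nat_rpow.mpr (by linarith)) (mul_weight_isBigO hb hba hf)

lemma summable_weight (hb : ∀ i, 0 < b i) (hba : ∀ i, b i < 1 + a) (he : 0 < excess b a) :
    Summable (weight b a) := by
  simpa using summable_mul_weight hb hba he (const_isBigO_natCast_rpow zero_le_one 1)

lemma summable_term (hb : ∀ i, 0 < b i) (hba : ∀ i, b i < 1 + a) (he : 0 < excess b a) :
    Summable (term b a) :=
  summable_mul_weight hb hba he (const_add_mul_isBigO_natCast a 2)

lemma certificate_isBigO (b : Fin 4 → ℝ) (a : ℝ) :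
    (fun k : ℕ ↦ certificate b a k) =O[atTop] fun k : ℕ ↦ (k : ℝ) ^ (2 : ℝ) := by
  have hquad := ((const_add_mul_isBigO_natCast (a - b 3) 1).mul
    (const_add_mul_isBigO_natCast (1 + 2 * a - b 0 - b 1 - b 2) 1)).congr_right
    (g₂ := fun k : ℕ ↦ (k : ℝ) ^ (2 : ℝ)) fun k ↦ by norm_num [pow_two]
  have hconst := const_isBigO_natCast_rpow zero_le_two
    ((1 + a - b 0 - b 1) * (1 + a - b 0 - b 2) * (1 + a - b 1 - b 2) / (excess b a + 1))
  refine ((hquad.add hconst).const_mul_left (excess b a)⁻¹).congr_left fun k ↦ ?_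
  rw [certificate, div_eq_inv_mul]
  ring_nf

lemma tendsto_certificate_mul_weight (hb : ∀ i, 0 < b i) (hba : ∀ i, b i < 1 + a)
    (he : 0 < excess b a) :
    Tendsto (fun k : ℕ ↦ certificate b a k * weight b a k) atTop (𝓝 0) := by
  refine (mul_weight_isBigO hb hba (certificate_isBigO b a)).trans_tendsto ?_
  rw [show 2 - 2 * (excess b a + 1) = -(2 * excess b a) by ring]
  exact (tendsto_rpow_neg_atTop (by positivity)).comp tendsto_natCast_atTop_atTop

theorem series_eq_certificate_add_ratio_mul (hb : ∀ i, 0 < b i) (hba : ∀ i, b i < 1 + a)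
    (he : 0 < excess b a) :
    series b a = certificate b a 0 + ratio b a * series b (a + 1) := by
  have hy : ∀ i, 0 < 1 + a - b i := fun i ↦ sub_pos.mpr (hba i)
  have hterm := (summable_term hb hba he).hasSum
  have hterm' := (summable_term (a := a + 1) hb (fun i ↦ by linarith [hba i])
    (by rw [excess_add]; linarith)).hasSum
  have hlim := (hterm.sub (hterm'.mul_left (ratio b a))).tendsto_sum_nat
  have htele (k : ℕ) : term b a k - ratio b a * term b (a + 1) k =
      certificate b a k * weight b a k -
        certificate b a (k + 1 : ℕ) * weight b a (k + 1) := by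
    rw [Nat.cast_add_one]
    exact term_sub_ratio_mul_term (fun i ↦ (hy i).ne')
      (fun i ↦ (add_pos_of_pos_of_nonneg (hy i) k.cast_nonneg).ne') he.ne' (by positivity)
  simp only [htele, sum_range_sub'] at hlim
  have hlim' := (tendsto_certificate_mul_weight hb hba he).const_sub
    (certificate b a (0 : ℕ) * weight b a 0)
  have := tendsto_nhds_unique hlim hlim'
  simp only [weight_zero, Nat.cast_zero, mul_one, sub_zero] at this
  exact sub_eq_iff_eq_add.mp this

lemma tendsto_ratio_add_nat (b : Fin 4 → ℝ) (a : ℝ) :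
    Tendsto (fun n : ℕ ↦ ratio b (a + n)) atTop (𝓝 (-1 / 4)) := by
  have hquot (c d e : ℝ) (he : e ≠ 0) :
      Tendsto (fun n : ℕ ↦ (c + 1 * n) / (d + e * n)) atTop (𝓝 (1 / e)) :=
    tendsto_add_mul_div_add_mul_atTop_nhds c d 1 he
  have hlim := ((((((hquot (1 + a - b 0 - b 1) (1 + a - b 0) 1 one_ne_zero).mul
    (hquot (1 + a - b 0 - b 2) (1 + a - b 1) 1 one_ne_zero)).mul
    (hquot (1 + a - b 0 - b 3) (1 + a - b 2) 1 one_ne_zero)).mul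
    (hquot (1 + a - b 1 - b 2) (1 + a - b 3) 1 one_ne_zero)).mul
    (hquot (1 + a - b 1 - b 3) (excess b a) 2 two_ne_zero)).mul
    (hquot (1 + a - b 2 - b 3) (excess b a + 1) 2 two_ne_zero)).neg
  convert! hlim using 2 with n
  · simp only [ratio, excess_add, Fin.prod_univ_four, div_mul_div_comm, neg_div]
    congr 2 <;> ring
  · norm_num

lemma abs_series_add_nat_le (hb : ∀ i, 0 < b i) (hba : ∀ i, b i < 1 + a) (he : 0 < excess b a)
    (n : ℕ) :
    |series b (a + n)| ≤ ((n : ℝ) + 1) * (∑' k, weight b a k + ∑' k, |term b a k|) := by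
  have hw := summable_weight hb hba he
  have ht := (summable_term hb hba he).abs
  have hbound (k : ℕ) : ‖term b (a + n) k‖ ≤ n * weight b a k + |term b a k| := by
    have hwn := weight_nonneg hb (a := a + n) (fun i ↦ (hba i).trans_le (by simp)) k
    have hwle := weight_le_weight hb hba (a' := a + n) (by simp) k
    have hw0 := weight_nonneg hb hba k
    calc ‖term b (a + n) k‖ = |n + (a + 2 * k)| * weight b (a + n) k := by
          rw [term, norm_mul, Real.norm_of_nonneg hwn, Real.norm_eq_abs]
          ring_nf
      _ ≤ (n + |a + 2 * k|) * weight b a k := by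
          gcongr
          exact (abs_add_le _ _).trans_eq (by rw [Nat.abs_cast])
      _ = n * weight b a k + |term b a k| := by
          rw [term, abs_mul, abs_of_nonneg hw0]
          ring
  calc |series b (a + n)|
      ≤ n * ∑' k, weight b a k + ∑' k, |term b a k| :=
        tsum_of_norm_bounded ((hw.hasSum.mul_left _).add ht.hasSum) hbound
    _ ≤ _ := by
        have hW : 0 ≤ ∑' k, weight b a k := tsum_nonneg (weight_nonneg hb hba)
        have hT : 0 ≤ ∑' k, |term b a k| := tsum_nonneg fun k ↦ abs_nonneg _
        have hn : (0 : ℝ) ≤ n := n.cast_nonneg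
        nlinarith [mul_nonneg hn hT]

theorem hasSum_prod_ratio_mul_certificate (hb : ∀ i, 0 < b i) (hba : ∀ i, b i < 1 + a)
    (he : 0 < excess b a) :
    HasSum (fun n : ℕ ↦ (∏ i ∈ range n, ratio b (a + i)) * certificate b (a + n) 0)
      (series b a) := by
  have hrec (n : ℕ) : series b (a + n) =
      certificate b (a + n) 0 + ratio b (a + n) * series b (a + (n + 1 : ℕ)) := by
    rw [Nat.cast_add_one, ← add_assoc]
    exact series_eq_certificate_add_ratio_mul hb (fun i ↦ (hba i).trans_le (by simp))
      (by rw [excess_add]; positivity)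
  have hsum : Summable fun n : ℕ ↦ (∏ i ∈ range n, ratio b (a + i)) * series b (a + n) := by
    have hgeom := summable_succ_mul_prod_range (tendsto_ratio_add_nat b a) (by norm_num [abs_div])
    refine .of_norm_bounded (hgeom.norm.mul_right (∑' k, weight b a k + ∑' k, |term b a k|))
      fun n ↦ ?_
    rw [norm_mul, norm_mul, Real.norm_of_nonneg (by positivity : (0 : ℝ) ≤ n + 1),
      mul_comm ((n : ℝ) + 1), mul_assoc]
    gcongr
    exact abs_series_add_nat_le hb hba he n
  simpa using hasSum_of_eq_add_mul_succ hrec hsum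

end Analysis

end VeryWellPoised

section SpecialValues

open VeryWellPoised

/-- The parameters `(1/3, 1/3, 2/3, 2/3)` for which `Ω(1)` is a multiple of `Kconst`. -/
noncomputable def thirds : Fin 4 → ℝ := ![1 / 3, 1 / 3, 2 / 3, 2 / 3]

lemma thirds_pos (i : Fin 4) : 0 < thirds i := by
  fin_cases i <;> norm_num [thirds]

lemma thirds_lt (i : Fin 4) : thirds i < 1 + 1 := by
  fin_cases i <;> norm_num [thirds]

lemma excess_thirds (n : ℝ) : excess thirds (1 + n) = 2 * n + 1 := by
  simp only [excess, thirds, Fin.sum_univ_four, Matrix.cons_val]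
  ring

lemma ratio_thirds (n : ℕ) : ratio thirds (1 + n) =
    -(9 * (n + 1) ^ 3 * (3 * n + 2)) / (2 * (2 * n + 1) * (3 * n + 4) * (3 * n + 5) ^ 2) := by
  have hprod : ∏ i, (1 + (1 + (n : ℝ)) - thirds i) = ((3 * n + 4) * (3 * n + 5)) ^ 2 / 81 := by
    simp only [thirds, Fin.prod_univ_four, Matrix.cons_val]
    ring
  rw [ratio, excess_thirds, hprod]
  simp only [thirds, Matrix.cons_val]
  field_simp
  ring

lemma certificate_thirds (n : ℕ) : certificate thirds (1 + n) 0 =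
    (15 * n + 11) * (3 * n + 2) / (18 * (2 * n + 1)) := by
  rw [certificate, excess_thirds]
  simp only [thirds, Matrix.cons_val]
  field_simp
  ring

lemma weight_thirds_one (k : ℕ) :
    weight thirds 1 k = (2 / ((3 * k + 1) * (3 * k + 2))) ^ 2 := by
  have h1 := ascPochhammer_eval_add_one_mul k (1 / 3 : ℝ)
  have h2 := ascPochhammer_eval_add_one_mul k (2 / 3 : ℝ)
  have p1 := ascPochhammer_pos k (1 / 3 : ℝ) (by norm_num)
  have p2 := ascPochhammer_pos k (2 / 3 : ℝ) (by norm_num)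
  rw [← eq_div_iff (by norm_num)] at h1 h2
  simp only [weight, thirds, Fin.prod_univ_four, Matrix.cons_val]
  rw [show (1 : ℝ) + 1 - 1 / 3 = 2 / 3 + 1 by norm_num,
    show (1 : ℝ) + 1 - 2 / 3 = 1 / 3 + 1 by norm_num, h1, h2]
  field_simp
  ring

lemma prod_ratio_thirds (n : ℕ) : ∏ i ∈ range n, ratio thirds (1 + i) =
    24 * (2 * n + 1) / (3 * n + 2) * (-27) ^ n /
      ((n + 1) ^ 3 * ((n + 1).centralBinom : ℝ) ^ 2 * (3 * (n + 1)).choose (n + 1)) := by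
  induction n with
  | zero => norm_num [Nat.centralBinom, Nat.choose]
  | succ n ih =>
    have hB : (0 : ℝ) < (n + 1).centralBinom := by exact_mod_cast (n + 1).centralBinom_pos
    have hC : (0 : ℝ) < (3 * (n + 1)).choose (n + 1) := by
      exact_mod_cast Nat.choose_pos (by lia)
    rw [prod_range_succ, ih, ratio_thirds, centralBinom_succ_eq (n + 1),
      choose_three_mul_succ_eq (n + 1)]
    push_cast
    field_simp
    ring

lemma chi3_mul_three_add_one (k : ℕ) (i : Fin 3) : chi3 (k * 3 + i + 1) = ![1, -1, 0] i := by
  fin_cases i <;> simp [chi3] <;> lia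

lemma abs_chi3_le_one (n : ℕ) : |chi3 n| ≤ 1 := by
  unfold chi3
  split_ifs <;> simp

lemma summable_chi3_div_sq : Summable fun n : ℕ ↦ chi3 (n + 1) / ((n : ℝ) + 1) ^ 2 := by
  have hsq : Summable fun n : ℕ ↦ 1 / ((n : ℝ) + 1) ^ 2 := by
    exact_mod_cast (summable_nat_add_iff 1).mpr (Real.summable_one_div_nat_pow.mpr one_lt_two)
  refine .of_norm_bounded hsq fun n ↦ ?_
  rw [norm_div, Real.norm_of_nonneg (by positivity : (0 : ℝ) ≤ (n + 1) ^ 2)]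
  gcongr
  exact abs_chi3_le_one _

lemma Kconst_eq_mul_series : Kconst = 3 / 4 * series thirds 1 := by
  rw [Kconst, tsum_eq_tsum_sum_mul_add summable_chi3_div_sq 3, series, ← tsum_mul_left]
  refine tsum_congr fun k ↦ ?_
  simp only [chi3_mul_three_add_one, Fin.sum_univ_three, term, weight_thirds_one,
    Matrix.cons_val, Fin.coe_ofNat_eq_mod]
  push_cast
  field_simp
  ring

end SpecialValues

theorem stmt6 :
    Kconst = ∑' n : ℕ,
      (15 * ((n : ℝ) + 1) - 4) * (-27 : ℝ) ^ n /
        (((n : ℝ) + 1) ^ 3 * (Nat.choose (2 * (n + 1)) (n + 1) : ℝ) ^ 2 *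
          (Nat.choose (3 * (n + 1)) (n + 1) : ℝ)) := by
  have hexcess : 0 < VeryWellPoised.excess thirds 1 :=
    one_pos.trans_eq (by simpa using (excess_thirds 0).symm)
  have hsum := VeryWellPoised.hasSum_prod_ratio_mul_certificate thirds_pos thirds_lt hexcess
  rw [Kconst_eq_mul_series, ← hsum.tsum_eq, ← tsum_mul_left]
  refine tsum_congr fun n ↦ ?_
  rw [prod_ratio_thirds, certificate_thirds, Nat.centralBinom_eq_two_mul_choose]
  field_simp
  ring
end

section
/- Let α, a, b be complex numbers such that none of α+a, α−a, α+b, α−b is a nonpositive integer. Then ∑_{k=0}^∞ (k+α)/(((k+α)² − a²)((k+α)² − b²)) = (1/2) ∑_{n=1}^∞ (−1)^{n−1} · (1+a+b)_{n−1}(1+a−b)_{n−1}(1−a+b)_{n−1}(1−a−b)_{n−1} · (α+a)_{n−1}(α−a)_{n−1}(α+b)_{n−1}(α−b)_{n−1} / (n · C(2n, n) · (α+a)_{2n}(α−a)_{2n}(α+b)_{2n}(α−b)_{2n}) · q(n), where q(n) = 2(2n−1)(3n+2α−3)((2n+α−1)² − a²)((2n+α−1)² − b²) + ((n+α−1)²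 − a²)((n+α−1)² − b²)(13n² − 10n(1−α) + 2(1−α)² − a² − b²). -/
/-- Pochhammer symbol `(x)_n = x (x+1) ⋯ (x+n-1)`. -/
noncomputable def poch (x : ℂ) (n : ℕ) : ℂ := ∏ i ∈ Finset.range n, (x + i)

/-!
The identity is a Markov–WZ acceleration. With `D y = (y² - a²)(y² - b²)` there is a pair `F`, `G`
satisfying `F (n + 1) x = F n (x + 1) + G n (x + 1) - G n x`, in which `F 0 (α + k)` is the `k`-th
term of the left series. Summing the relation over `x = α + k`, and then over `n`, yields
`∑ₖ F 0 (α + k) = ∑ₙ (F n α + G n α)`, and `F n α + G n α` is half the `n`-th term of the right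
series. Convergence rests on one estimate: the common factor of `F n (α + k)` and `G n (α + k)` is
`O(2⁻ⁿ (k + 1)⁻⁴)` uniformly in `n` and `k`.
-/

open Asymptotics Filter Finset

namespace MarkovWZ

section Summation

theorem tsum_eq_tsum_add_of_wz {E : Type*} [AddCommGroup E] [UniformSpace E] [IsUniformAddGroup E]
    [CompleteSpace E] [T2Space E] {F G : ℕ → ℕ → E}
    (hF : Summable fun p : ℕ × ℕ ↦ F p.1 p.2) (hG : Summable fun p : ℕ × ℕ ↦ G p.1 p.2)
    (wz : ∀ n k, F (n + 1) k = F n (k + 1) + G n (k + 1) - G n k) :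
    ∑' k, F 0 k = ∑' n, (F n 0 + G n 0) := by
  have hFn (n : ℕ) : Summable (F n) := hF.prod_factor n
  have hGn (n : ℕ) : Summable (G n) := hG.prod_factor n
  have hS : Summable fun n ↦ ∑' k, F n k := hF.prod
  have boundary (n : ℕ) : F n 0 + G n 0 = ∑' k, F n k - ∑' k, F (n + 1) k := by
    have hF' := (summable_nat_add_iff 1).mpr (hFn n)
    have hG' := (summable_nat_add_iff 1).mpr (hGn n)
    rw [tsum_congr (wz n), (hF'.add hG').tsum_sub (hGn n), hF'.tsum_add hG',
      (hFn n).tsum_eq_zero_add, (hGn n).tsum_eq_zero_add]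
    abel
  rw [tsum_congr boundary, hS.tsum_sub ((summable_nat_add_iff 1).mpr hS), hS.tsum_eq_zero_add,
    add_sub_cancel_right]

theorem isBigO_top_pow_mul_of_norm_succ_le {E ι : Type*} [Norm E] {f : ℕ → ι → E} {v : ι → ℝ}
    {r : ℝ} (hr : 0 < r) (hf : ∀ n, f n =O[⊤] v)
    (hstep : ∀ᶠ n in atTop, ∀ i, ‖f (n + 1) i‖ ≤ r * ‖f n i‖) :
    (fun p : ℕ × ι ↦ f p.1 p.2) =O[⊤] fun p ↦ r ^ p.1 * v p.2 := by
  choose C hC using fun n ↦ isBigO_top.mp (hf n)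
  obtain ⟨N, hN⟩ := eventually_atTop.mp hstep
  obtain ⟨B, hB⟩ := ((Set.finite_Iic N).image fun n ↦ C n / r ^ n).bddAbove
  have initial (n : ℕ) (hn : n ≤ N) (i : ι) : ‖f n i‖ ≤ B * (r ^ n * ‖v i‖) := by
    have hCB : C n ≤ B * r ^ n := (div_le_iff₀ (by positivity)).mp (hB ⟨n, hn, rfl⟩)
    calc ‖f n i‖ ≤ C n * ‖v i‖ := hC n i
      _ ≤ B * r ^ n * ‖v i‖ := by gcongr
      _ = B * (r ^ n * ‖v i‖) := by ring
  have tail (n : ℕ) (hn : N ≤ n) (i : ι) : ‖f n i‖ ≤ B * (r ^ n * ‖v i‖) := by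
    induction n, hn using Nat.le_induction with
    | base => exact initial N le_rfl i
    | succ n hn ih =>
      calc ‖f (n + 1) i‖ ≤ r * ‖f n i‖ := hN n hn i
        _ ≤ r * (B * (r ^ n * ‖v i‖)) := by gcongr
        _ = B * (r ^ (n + 1) * ‖v i‖) := by ring
  refine isBigO_top.mpr ⟨B, fun ⟨n, i⟩ ↦ ?_⟩
  rw [norm_mul, norm_pow, Real.norm_of_nonneg hr.le]
  exact (le_total n N).elim (initial n · i) (tail n · i)

end Summation

section WZPair

/-- The denominator `(y² - a²)(y² - b²)` of a term of the left series, at `y = k + α`. The linear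
factors gained by the numerators of the right series are `denom (a + b) (a - b) (n + 1)`. -/
noncomputable def denom (a b y : ℂ) : ℂ := (y ^ 2 - a ^ 2) * (y ^ 2 - b ^ 2)

/-- The product `D (x + n) ⋯ D (x + 2n)` of consecutive values of `D = denom a b`. -/
noncomputable def denomProd (a b : ℂ) (n : ℕ) (x : ℂ) : ℂ :=
  ∏ j ∈ range (n + 1), denom a b (x + n + j)

/-- The coefficient `(-1)ⁿ (1+a+b)ₙ (1+a-b)ₙ (1-a+b)ₙ (1-a-b)ₙ / (2 C(2n,n))`, its four Pochhammer
symbols being merged into one product. -/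
noncomputable def coeff (a b : ℂ) (n : ℕ) : ℂ :=
  (-1) ^ n * (∏ j ∈ range n, denom (a + b) (a - b) (1 + j)) / (2 * n.centralBinom)

/-- The hypergeometric factor common to both members of the Markov–WZ pair. -/
noncomputable def kernel (a b : ℂ) (n : ℕ) (x : ℂ) : ℂ := coeff a b n / denomProd a b n x

/-- The quadratic factor `13n² - 10n(1-α) + 2(1-α)² - a² - b²` of `q(n)` at `α = x`, with `n`
shifted to start at `0`. -/
noncomputable def quadFactor (a b : ℂ) (n : ℕ) (x : ℂ) : ℂ :=
  13 * ((n : ℂ) + 1) ^ 2 - 10 * ((n : ℂ) + 1) * (1 - x) + 2 * (1 - x) ^ 2 - a ^ 2 - b ^ 2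

/-- The first member of the Markov–WZ pair; at `n = 0` it is the summand of the left series. -/
noncomputable def wzF (a b : ℂ) (n : ℕ) (x : ℂ) : ℂ := (2 * x + 3 * n) * kernel a b n x

/-- The second member of the Markov–WZ pair. -/
noncomputable def wzG (a b : ℂ) (n : ℕ) (x : ℂ) : ℂ :=
  quadFactor a b n x / (2 * (2 * n + 1)) * kernel a b n (x + 1)

/-- The `n`-th term of the right series, with `n` shifted to start at `0`. -/
noncomputable def acceleratedTerm (α a b : ℂ) (n : ℕ) : ℂ :=
  (-1 : ℂ) ^ n *
    (poch (1 + a + b) n * poch (1 + a - b) n * poch (1 - a + b) n * poch (1 - a - b) n) *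
    (poch (α + a) n * poch (α - a) n * poch (α + b) n * poch (α - b) n) /
    (((n : ℂ) + 1) * (Nat.choose (2 * (n + 1)) (n + 1) : ℂ) *
      (poch (α + a) (2 * (n + 1)) * poch (α - a) (2 * (n + 1)) *
        poch (α + b) (2 * (n + 1)) * poch (α - b) (2 * (n + 1)))) *
    (2 * (2 * ((n : ℂ) + 1) - 1) * (3 * ((n : ℂ) + 1) + 2 * α - 3) *
        ((2 * ((n : ℂ) + 1) + α - 1) ^ 2 - a ^ 2) * ((2 * ((n : ℂ) + 1) + α - 1) ^ 2 - b ^ 2) +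
      ((((n : ℂ) + 1) + α - 1) ^ 2 - a ^ 2) * ((((n : ℂ) + 1) + α - 1) ^ 2 - b ^ 2) *
        (13 * ((n : ℂ) + 1) ^ 2 - 10 * ((n : ℂ) + 1) * (1 - α) +
          2 * (1 - α) ^ 2 - a ^ 2 - b ^ 2))

variable {a b x : ℂ}

lemma denom_add_natCast_ne_zero (h1 : ∀ k : ℕ, x + a ≠ -(k : ℂ)) (h2 : ∀ k : ℕ, x - a ≠ -(k : ℂ))
    (h3 : ∀ k : ℕ, x + b ≠ -(k : ℂ)) (h4 : ∀ k : ℕ, x - b ≠ -(k : ℂ)) (k : ℕ) :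
    denom a b (x + k) ≠ 0 := by
  have shift {z : ℂ} (hz : ∀ k : ℕ, z ≠ -(k : ℂ)) : z + k ≠ 0 :=
    fun h ↦ hz k (eq_neg_of_add_eq_zero_left h)
  simp only [denom, sq_sub_sq, add_right_comm x, add_sub_right_comm x]
  exact mul_ne_zero (mul_ne_zero (shift h1) (shift h2)) (mul_ne_zero (shift h3) (shift h4))

lemma denomProd_ne_zero (hx : ∀ k : ℕ, denom a b (x + k) ≠ 0) (n : ℕ) : denomProd a b n x ≠ 0 :=
  prod_ne_zero_iff.mpr fun j _ ↦ by simpa [add_assoc] using hx (n + j)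

lemma denomProd_succ (a b x : ℂ) (n : ℕ) :
    denomProd a b (n + 1) x = denomProd a b n (x + 1) * denom a b (x + 2 * n + 2) := by
  have hshift (j : ℕ) : x + (n + 1 : ℕ) + j = x + 1 + n + j := by push_cast; ring
  have hlast : x + 1 + n + (n + 1 : ℕ) = x + 2 * n + 2 := by push_cast; ring
  simp only [denomProd, prod_range_succ _ (n + 1), hshift, hlast]

lemma prod_range_denom_eq_denomProd_mul (a b x : ℂ) (n : ℕ) :
    ∏ j ∈ range (n + 2), denom a b (x + n + j) =
      denomProd a b n x * denom a b (x + 2 * n + 1) := by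
  have hlast : x + n + (n + 1 : ℕ) = x + 2 * n + 1 := by push_cast; ring
  rw [prod_range_succ, denomProd, hlast]

lemma denomProd_add_one {n : ℕ} (hx : denom a b (x + n) ≠ 0) :
    denomProd a b n (x + 1) =
      denomProd a b n x * denom a b (x + 2 * n + 1) / denom a b (x + n) := by
  have hshift (j : ℕ) : x + n + (j + 1 : ℕ) = x + 1 + n + j := by push_cast; ring
  rw [eq_div_iff hx, ← prod_range_denom_eq_denomProd_mul, prod_range_succ', denomProd]
  simp only [hshift, Nat.cast_zero, add_zero]

lemma prod_range_denom (a b x : ℂ) (n : ℕ) :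
    ∏ j ∈ range (2 * (n + 1)), denom a b (x + j) = (∏ j ∈ range n, denom a b (x + j)) *
      (denomProd a b n x * denom a b (x + 2 * n + 1)) := by
  rw [show 2 * (n + 1) = n + (n + 2) by ring, prod_range_add, ← prod_range_denom_eq_denomProd_mul]
  simp only [Nat.cast_add, add_assoc]

lemma poch_mul_poch_eq_prod_denom (a b x : ℂ) (n : ℕ) :
    poch (x + a) n * poch (x - a) n * poch (x + b) n * poch (x - b) n =
      ∏ j ∈ range n, denom a b (x + j) := by
  simp only [poch, ← prod_mul_distrib, denom]
  exact prod_congr rfl fun j _ ↦ by ring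

lemma two_mul_add_one_ne_zero (n : ℕ) : (2 * (n : ℂ) + 1) ≠ 0 := by
  exact_mod_cast Nat.succ_ne_zero (2 * n)

lemma natCast_add_one_mul_centralBinom_succ (n : ℕ) :
    ((n : ℂ) + 1) * (n + 1).centralBinom = 2 * (2 * n + 1) * n.centralBinom := by
  exact_mod_cast Nat.succ_mul_centralBinom_succ n

lemma coeff_succ (a b : ℂ) (n : ℕ) :
    coeff a b (n + 1) =
      -(((n + 1) / (2 * (2 * n + 1))) * denom (a + b) (a - b) (n + 1) * coeff a b n) := by
  have hn : (n : ℂ) + 1 ≠ 0 := Nat.cast_add_one_ne_zero n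
  have hbinom : (n.centralBinom : ℂ) ≠ 0 := mod_cast n.centralBinom_ne_zero
  have hcast : ((n + 1).centralBinom : ℂ) = 2 * (2 * n + 1) * n.centralBinom / (n + 1) := by
    rw [eq_div_iff hn, mul_comm, natCast_add_one_mul_centralBinom_succ]
  rw [coeff, coeff, hcast, prod_range_succ, add_comm (1 : ℂ) n]
  field_simp
  ring

/-- After clearing denominators this is a polynomial identity. -/
theorem wzF_succ (hx : ∀ k : ℕ, denom a b (x + k) ≠ 0) (n : ℕ) :
    wzF a b (n + 1) x = wzF a b n (x + 1) + wzG a b n (x + 1) - wzG a b n x := by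
  have hx1 (k : ℕ) : denom a b (x + 1 + k) ≠ 0 := by
    simpa [add_assoc, add_comm (k : ℂ)] using hx (k + 1)
  have hfirst := hx1 n
  have hlast : denom a b (x + 2 * n + 2) ≠ 0 := by simpa [add_assoc] using hx (2 * n + 2)
  have hprod := denomProd_ne_zero hx1 n
  have hodd := two_mul_add_one_ne_zero n
  have hshift : denomProd a b n (x + 1 + 1) =
      denomProd a b n (x + 1) * denom a b (x + 2 * n + 2) / denom a b (x + 1 + n) := by
    rw [denomProd_add_one hfirst, show x + 1 + 2 * n + 1 = x + 2 * n + 2 by ring]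
  simp only [wzF, wzG, kernel, denomProd_succ, hshift, coeff_succ]
  field_simp
  simp only [denom, quadFactor]
  push_cast
  ring

theorem half_mul_acceleratedTerm (hx : ∀ k : ℕ, denom a b (x + k) ≠ 0) (n : ℕ) :
    1 / 2 * acceleratedTerm x a b n = wzF a b n x + wzG a b n x := by
  have hnumer : poch (1 + a + b) n * poch (1 + a - b) n * poch (1 - a + b) n *
      poch (1 - a - b) n = ∏ j ∈ range n, denom (a + b) (a - b) (1 + j) := by
    rw [← poch_mul_poch_eq_prod_denom]
    ring_nf
  have hlast_eq : ((2 * ((n : ℂ) + 1) + x - 1) ^ 2 - a ^ 2) *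
      ((2 * ((n : ℂ) + 1) + x - 1) ^ 2 - b ^ 2) = denom a b (x + 2 * n + 1) := by
    rw [denom]; ring
  have hfirst_eq : (((n : ℂ) + 1 + x - 1) ^ 2 - a ^ 2) * (((n : ℂ) + 1 + x - 1) ^ 2 - b ^ 2) =
      denom a b (x + n) := by
    rw [denom]; ring
  have hfirst : denom a b (x + n) ≠ 0 := hx n
  have hlast : denom a b (x + 2 * n + 1) ≠ 0 := by simpa [add_assoc] using hx (2 * n + 1)
  have hprod := denomProd_ne_zero hx n
  have hinit : ∏ j ∈ range n, denom a b (x + j) ≠ 0 := prod_ne_zero_iff.mpr fun j _ ↦ hx j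
  have hbinom : (n.centralBinom : ℂ) ≠ 0 := mod_cast n.centralBinom_ne_zero
  have hodd := two_mul_add_one_ne_zero n
  rw [acceleratedTerm, ← Nat.centralBinom_eq_two_mul_choose, natCast_add_one_mul_centralBinom_succ,
    hnumer, poch_mul_poch_eq_prod_denom, poch_mul_poch_eq_prod_denom, prod_range_denom, hfirst_eq,
    mul_assoc (2 * (2 * ((n : ℂ) + 1) - 1) * _), hlast_eq]
  simp only [wzF, wzG, kernel, denomProd_add_one hfirst, coeff, quadFactor]
  field_simp
  ring

lemma wzF_zero (a b x : ℂ) : wzF a b 0 x = x / denom a b x := by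
  simp only [wzF, kernel, coeff, denomProd, zero_add, range_zero, range_one, prod_empty,
    prod_singleton, pow_zero, Nat.centralBinom_zero, Nat.cast_zero, Nat.cast_one, add_zero]
  ring

end WZPair

section Estimates

variable {a b y : ℂ} {s : ℝ}

lemma norm_denom_le (ha : ‖a‖ ≤ s) (hb : ‖b‖ ≤ s) : ‖denom a b y‖ ≤ (‖y‖ + s) ^ 4 := by
  have factor {c : ℂ} (hc : ‖c‖ ≤ s) : ‖y ^ 2 - c ^ 2‖ ≤ (‖y‖ + s) ^ 2 := by
    have hadd := norm_add_le_of_le (le_refl ‖y‖) hc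
    have hsub := norm_sub_le_of_le (le_refl ‖y‖) hc
    rw [sq_sub_sq, norm_mul, sq]
    exact mul_le_mul hadd hsub (norm_nonneg _) ((norm_nonneg _).trans hadd)
  calc ‖denom a b y‖ = ‖y ^ 2 - a ^ 2‖ * ‖y ^ 2 - b ^ 2‖ := norm_mul _ _
    _ ≤ (‖y‖ + s) ^ 2 * (‖y‖ + s) ^ 2 := by gcongr <;> apply factor <;> assumption
    _ = (‖y‖ + s) ^ 4 := by ring

lemma pow_re_sub_le_norm_denom (ha : ‖a‖ ≤ s) (hb : ‖b‖ ≤ s) (hy : s ≤ y.re) :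
    (y.re - s) ^ 4 ≤ ‖denom a b y‖ := by
  have factor {c : ℂ} (hc : ‖c‖ ≤ s) : (y.re - s) ^ 2 ≤ ‖y ^ 2 - c ^ 2‖ := by
    have hre := abs_le.mp ((Complex.abs_re_le_norm c).trans hc)
    have hadd : y.re - s ≤ ‖y + c‖ :=
      le_trans (by rw [Complex.add_re]; linarith) (Complex.re_le_norm _)
    have hsub : y.re - s ≤ ‖y - c‖ :=
      le_trans (by rw [Complex.sub_re]; linarith) (Complex.re_le_norm _)
    rw [sq_sub_sq, norm_mul, sq]
    exact mul_le_mul hadd hsub (sub_nonneg.mpr hy) (norm_nonneg _)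
  calc (y.re - s) ^ 4 = (y.re - s) ^ 2 * (y.re - s) ^ 2 := by ring
    _ ≤ ‖y ^ 2 - a ^ 2‖ * ‖y ^ 2 - b ^ 2‖ := by gcongr <;> apply factor <;> assumption
    _ = ‖denom a b y‖ := (norm_mul _ _).symm

lemma denom_ne_zero_of_norm_lt_re (ha : ‖a‖ < y.re) (hb : ‖b‖ < y.re) : denom a b y ≠ 0 := by
  have hmax := max_lt ha hb
  exact norm_pos_iff.mp ((pow_pos (sub_pos.mpr hmax) 4).trans_le
    (pow_re_sub_le_norm_denom (le_max_left _ _) (le_max_right _ _) hmax.le))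

lemma norm_denom_add_sub_le {w : ℂ} (hy : ‖w‖ + 2 * (‖a‖ + ‖b‖) ≤ y.re) :
    ‖denom (a + b) (a - b) w‖ ≤ ‖denom a b y‖ := by
  have hA := norm_nonneg a
  have hB := norm_nonneg b
  have hw := norm_nonneg w
  calc ‖denom (a + b) (a - b) w‖ ≤ (‖w‖ + (‖a‖ + ‖b‖)) ^ 4 :=
        norm_denom_le (norm_add_le a b) (norm_sub_le a b)
    _ ≤ (y.re - (‖a‖ + ‖b‖)) ^ 4 := by gcongr ?_ ^ 4; linarith
    _ ≤ ‖denom a b y‖ :=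
        pow_re_sub_le_norm_denom (by linarith) (by linarith) (by linarith)

lemma norm_le_norm_add_ofReal {t : ℝ} (hy : 0 ≤ y.re) (ht : 0 ≤ t) : ‖y‖ ≤ ‖y + t‖ := by
  simp only [Complex.norm_eq_sqrt_sq_add_sq, Complex.add_re, Complex.add_im, Complex.ofReal_re,
    Complex.ofReal_im, add_zero]
  gcongr
  linarith

lemma norm_denom_le_norm_denom_add_ofReal {t : ℝ} (ha : ‖a‖ ≤ y.re) (hb : ‖b‖ ≤ y.re)
    (ht : 0 ≤ t) : ‖denom a b y‖ ≤ ‖denom a b (y + t)‖ := by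
  have factor {c : ℂ} (hc : ‖c‖ ≤ y.re) : ‖y ^ 2 - c ^ 2‖ ≤ ‖(y + t) ^ 2 - c ^ 2‖ := by
    have hre := abs_le.mp ((Complex.abs_re_le_norm c).trans hc)
    rw [sq_sub_sq, sq_sub_sq, norm_mul, norm_mul, add_right_comm, add_sub_right_comm]
    gcongr
    · exact norm_le_norm_add_ofReal (by rw [Complex.add_re]; linarith) ht
    · exact norm_le_norm_add_ofReal (by rw [Complex.sub_re]; linarith) ht
  simp only [denom, norm_mul]
  gcongr <;> apply factor <;> assumption

lemma norm_denomProd_le_norm_denomProd_add_one {n : ℕ} (ha : ‖a‖ ≤ y.re + n)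
    (hb : ‖b‖ ≤ y.re + n) : ‖denomProd a b n y‖ ≤ ‖denomProd a b n (y + 1)‖ := by
  simp only [denomProd, norm_prod]
  gcongr with j
  have hre : y.re + n ≤ (y + n + j).re := by simp
  have hshift : y + 1 + n + j = y + n + j + (1 : ℝ) := by push_cast; ring
  rw [hshift]
  exact norm_denom_le_norm_denom_add_ofReal (ha.trans hre) (hb.trans hre) zero_le_one

/-- Passing from `n` to `n + 1`, the factor `denom (a + b) (a - b) (n + 1)` gained by `coeff` is
dominated by the new factor of `denomProd`, the shift of the remaining factors only helps, and
`(n + 1) / (2 (2n + 1)) ≤ 1 / 2`. -/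
lemma norm_kernel_succ_le {n : ℕ} (hy : 2 * (‖a‖ + ‖b‖) < y.re + n) :
    ‖kernel a b (n + 1) y‖ ≤ 1 / 2 * ‖kernel a b n y‖ := by
  have hA := norm_nonneg a
  have hB := norm_nonneg b
  have hratio : ‖((n : ℂ) + 1) / (2 * (2 * n + 1))‖ ≤ 1 / 2 := by
    rw [show ((n : ℂ) + 1) / (2 * (2 * n + 1)) = ((n + 1 : ℝ) / (2 * (2 * n + 1)) : ℝ) by
        push_cast; rfl, Complex.norm_real, Real.norm_of_nonneg (by positivity),
      div_le_div_iff₀ (by positivity) (by positivity)]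
    linarith [n.cast_nonneg (α := ℝ)]
  have hgain : ‖denom (a + b) (a - b) (n + 1)‖ ≤ ‖denom a b (y + 2 * n + 2)‖ := by
    have hn : ‖(n : ℂ) + 1‖ = n + 1 := by exact_mod_cast Complex.norm_natCast (n + 1)
    have hre : (y + 2 * n + 2).re = y.re + 2 * n + 2 := by simp
    exact norm_denom_add_sub_le (by rw [hn, hre]; linarith)
  have hprod : denomProd a b n y ≠ 0 := by
    refine prod_ne_zero_iff.mpr fun j _ ↦ ?_
    have hre : y.re + n ≤ (y + n + j).re := by simp
    exact denom_ne_zero_of_norm_lt_re (by linarith) (by linarith)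
  have hshift : ‖denomProd a b n y‖ ≤ ‖denomProd a b n (y + 1)‖ :=
    norm_denomProd_le_norm_denomProd_add_one (by linarith) (by linarith)
  calc ‖kernel a b (n + 1) y‖ =
        ‖((n : ℂ) + 1) / (2 * (2 * n + 1))‖ *
          (‖denom (a + b) (a - b) (n + 1)‖ / ‖denom a b (y + 2 * n + 2)‖) *
          (‖coeff a b n‖ / ‖denomProd a b n (y + 1)‖) := by
        rw [kernel, coeff_succ, denomProd_succ, norm_div, norm_neg, norm_mul, norm_mul, norm_mul]
        ring
    _ ≤ 1 / 2 * 1 * (‖coeff a b n‖ / ‖denomProd a b n y‖) := by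
        gcongr
        exact div_le_one_of_le₀ hgain (norm_nonneg _)
    _ = 1 / 2 * ‖kernel a b n y‖ := by rw [kernel, norm_div, mul_one]

lemma natCast_add_one_pow_isBigO_denom (a b z : ℂ) :
    (fun k : ℕ ↦ ((k : ℝ) + 1) ^ 4) =O[atTop] fun k ↦ denom a b (z + k) := by
  refine IsBigO.of_bound (2 ^ 4) ?_
  filter_upwards [tendsto_natCast_atTop_atTop.eventually_ge_atTop
    (1 + 2 * (‖a‖ + ‖b‖ - z.re))] with k hk
  have hA := norm_nonneg a
  have hB := norm_nonneg b
  have hre : (z + k).re = z.re + k := by simp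
  rw [Real.norm_of_nonneg (by positivity)]
  calc ((k : ℝ) + 1) ^ 4 ≤ (2 * ((z + k).re - (‖a‖ + ‖b‖))) ^ 4 := by
        rw [hre]; gcongr; linarith
    _ = 2 ^ 4 * ((z + k).re - (‖a‖ + ‖b‖)) ^ 4 := mul_pow _ _ _
    _ ≤ 2 ^ 4 * ‖denom a b (z + k)‖ := by
        gcongr
        exact pow_re_sub_le_norm_denom (by linarith) (by linarith) (by rw [hre]; linarith)

lemma kernel_isBigO_atTop (a b z : ℂ) (n : ℕ) :
    (fun k : ℕ ↦ kernel a b n (z + k)) =O[atTop] fun k ↦ (((k : ℝ) + 1) ^ 4)⁻¹ := by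
  have hprod : (fun k : ℕ ↦ ((k : ℝ) + 1) ^ 4) =O[atTop] fun k ↦ denomProd a b n (z + k) := by
    have hpow : (fun k : ℕ ↦ ∏ _j ∈ range (n + 1), ((k : ℝ) + 1) ^ 4) =O[atTop]
        fun k ↦ denomProd a b n (z + k) := by
      refine IsBigO.finsetProd fun j _ ↦ ?_
      simpa only [add_assoc, add_left_comm, add_comm] using
        natCast_add_one_pow_isBigO_denom a b (z + n + j)
    refine (isBigO_of_le _ fun k ↦ ?_).trans hpow
    have hk : 1 ≤ ((k : ℝ) + 1) ^ 4 := one_le_pow₀ (by simp)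
    rw [prod_const, card_range, Real.norm_of_nonneg (by positivity),
      Real.norm_of_nonneg (by positivity)]
    exact le_self_pow₀ hk n.succ_ne_zero
  have hinv := (hprod.inv_rev (.of_forall fun k h ↦ absurd h (by positivity))).const_mul_left
    (coeff a b n)
  simpa only [kernel, div_eq_mul_inv] using hinv

theorem kernel_isBigO_top (a b z : ℂ) :
    (fun p : ℕ × ℕ ↦ kernel a b p.1 (z + p.2)) =O[⊤]
      fun p ↦ (1 / 2 : ℝ) ^ p.1 * (((p.2 : ℝ) + 1) ^ 4)⁻¹ := by
  refine isBigO_top_pow_mul_of_norm_succ_le (f := fun n k ↦ kernel a b n (z + (k : ℕ)))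
    (v := fun k : ℕ ↦ (((k : ℝ) + 1) ^ 4)⁻¹) (by norm_num) (fun n ↦ ?_) ?_
  · rw [isBigO_top]
    exact (isBigO_nat_atTop_iff fun k h ↦ absurd h (by positivity)).mp
      (kernel_isBigO_atTop a b z n)
  · filter_upwards [tendsto_natCast_atTop_atTop.eventually_gt_atTop
      (2 * (‖a‖ + ‖b‖) - z.re)] with n hn k
    refine norm_kernel_succ_le ?_
    rw [Complex.add_re, Complex.natCast_re]
    linarith [k.cast_nonneg (α := ℝ)]

section PolynomialGrowth

lemma const_isBigO_top (c : ℂ) :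
    (fun _ : ℕ × ℕ ↦ c) =O[⊤] fun p ↦ ((p.1 : ℝ) + 1) * ((p.2 : ℝ) + 1) := by
  refine isBigO_top.mpr ⟨‖c‖, fun p ↦ ?_⟩
  rw [Real.norm_of_nonneg (by positivity)]
  exact le_mul_of_one_le_right (norm_nonneg c)
    (one_le_mul_of_one_le_of_one_le (by simp) (by simp))

lemma natCast_fst_isBigO_top :
    (fun p : ℕ × ℕ ↦ (p.1 : ℂ)) =O[⊤] fun p ↦ ((p.1 : ℝ) + 1) * ((p.2 : ℝ) + 1) :=
  isBigO_of_le _ fun p ↦ by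
    rw [Complex.norm_natCast, Real.norm_of_nonneg (by positivity)]
    nlinarith [p.1.cast_nonneg (α := ℝ), p.2.cast_nonneg (α := ℝ)]

lemma natCast_snd_isBigO_top :
    (fun p : ℕ × ℕ ↦ (p.2 : ℂ)) =O[⊤] fun p ↦ ((p.1 : ℝ) + 1) * ((p.2 : ℝ) + 1) :=
  isBigO_of_le _ fun p ↦ by
    rw [Complex.norm_natCast, Real.norm_of_nonneg (by positivity)]
    nlinarith [p.1.cast_nonneg (α := ℝ), p.2.cast_nonneg (α := ℝ)]

lemma quadFactor_isBigO_top (a b z : ℂ) :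
    (fun p : ℕ × ℕ ↦ quadFactor a b p.1 (z + p.2)) =O[⊤]
      fun p ↦ (((p.1 : ℝ) + 1) * ((p.2 : ℝ) + 1)) ^ 2 := by
  have hn := natCast_fst_isBigO_top.add (const_isBigO_top 1)
  have hx := (const_isBigO_top 1).sub ((const_isBigO_top z).add natCast_snd_isBigO_top)
  have hnx := (hn.const_mul_left 10).mul hx
  simp only [← sq] at hnx
  exact ((((((hn.pow 2).const_mul_left 13).sub hnx).add ((hx.pow 2).const_mul_left 2)).sub
    ((const_isBigO_top a).pow 2)).sub ((const_isBigO_top b).pow 2))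

end PolynomialGrowth

lemma summable_of_isBigO_sq_mul_geometric {E : Type*} [NormedAddCommGroup E] [CompleteSpace E]
    {f : ℕ × ℕ → E} (hf : f =O[⊤] fun p ↦
      (((p.1 : ℝ) + 1) * ((p.2 : ℝ) + 1)) ^ 2 * ((1 / 2 : ℝ) ^ p.1 * (((p.2 : ℝ) + 1) ^ 4)⁻¹)) :
    Summable f := by
  have hgeom : Summable fun n : ℕ ↦ ((n : ℝ) + 1) ^ 2 * (1 / 2) ^ n := by
    have h := (summable_nat_add_iff 1).mpr
      (summable_pow_mul_geometric_of_norm_lt_one 2 (r := (1 / 2 : ℝ)) (by norm_num))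
    exact (h.mul_left 2).congr fun n ↦ by push_cast; ring
  have hsq : Summable fun k : ℕ ↦ (((k : ℝ) + 1) ^ 2)⁻¹ := by
    simpa using (summable_nat_add_iff 1).mpr (Real.summable_nat_pow_inv.mpr one_lt_two)
  have hprod := hgeom.mul_of_nonneg hsq (fun n ↦ by positivity) (fun k ↦ by positivity)
  refine summable_of_isBigO (hprod.congr fun p ↦ ?_) (hf.mono le_top)
  field_simp

theorem summable_wzF (a b z : ℂ) : Summable fun p : ℕ × ℕ ↦ wzF a b p.1 (z + p.2) := by
  have hlin : (fun p : ℕ × ℕ ↦ 2 * (z + (p.2 : ℂ)) + 3 * p.1) =O[⊤]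
      fun p ↦ (((p.1 : ℝ) + 1) * ((p.2 : ℝ) + 1)) ^ 2 := by
    refine ((((const_isBigO_top z).add natCast_snd_isBigO_top).const_mul_left 2).add
      (natCast_fst_isBigO_top.const_mul_left 3)).trans (isBigO_of_le _ fun p ↦ ?_)
    rw [norm_pow, Real.norm_of_nonneg (by positivity)]
    exact le_self_pow₀ (one_le_mul_of_one_le_of_one_le (by simp) (by simp)) two_ne_zero
  exact summable_of_isBigO_sq_mul_geometric (hlin.mul (kernel_isBigO_top a b z))

theorem summable_wzG (a b z : ℂ) : Summable fun p : ℕ × ℕ ↦ wzG a b p.1 (z + p.2) := by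
  have hrat : (fun p : ℕ × ℕ ↦ quadFactor a b p.1 (z + p.2) / (2 * (2 * p.1 + 1))) =O[⊤]
      fun p ↦ (((p.1 : ℝ) + 1) * ((p.2 : ℝ) + 1)) ^ 2 := by
    refine (isBigO_of_le _ fun p ↦ ?_).trans (quadFactor_isBigO_top a b z)
    rw [norm_div]
    refine div_le_self (norm_nonneg _) ?_
    rw [show (2 * (2 * p.1 + 1) : ℂ) = (2 * (2 * p.1 + 1) : ℕ) by push_cast; rfl,
      Complex.norm_natCast]
    exact_mod_cast show 1 ≤ 2 * (2 * p.1 + 1) by lia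
  have hkernel := kernel_isBigO_top a b (z + 1)
  simp only [add_right_comm z 1] at hkernel
  exact summable_of_isBigO_sq_mul_geometric (hrat.mul hkernel)

end Estimates

end MarkovWZ

open MarkovWZ in
theorem stmt14 (α a b : ℂ)
    (h1 : ∀ k : ℕ, α + a ≠ -(k : ℂ)) (h2 : ∀ k : ℕ, α - a ≠ -(k : ℂ))
    (h3 : ∀ k : ℕ, α + b ≠ -(k : ℂ)) (h4 : ∀ k : ℕ, α - b ≠ -(k : ℂ)) :
    ∑' k : ℕ,
        ((k : ℂ) + α) / ((((k : ℂ) + α) ^ 2 - a ^ 2) * (((k : ℂ) + α) ^ 2 - b ^ 2))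
      = (1 / 2) * ∑' n : ℕ,
          (-1 : ℂ) ^ n *
            (poch (1 + a + b) n * poch (1 + a - b) n * poch (1 - a + b) n *
              poch (1 - a - b) n) *
            (poch (α + a) n * poch (α - a) n * poch (α + b) n * poch (α - b) n) /
            (((n : ℂ) + 1) * (Nat.choose (2 * (n + 1)) (n + 1) : ℂ) *
              (poch (α + a) (2 * (n + 1)) * poch (α - a) (2 * (n + 1)) *
                poch (α + b) (2 * (n + 1)) * poch (α - b) (2 * (n + 1)))) *
            (2 * (2 * ((n : ℂ) + 1) - 1) * (3 * ((n : ℂ) + 1) + 2 * α - 3) *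
                ((2 * ((n : ℂ) + 1) + α - 1) ^ 2 - a ^ 2) *
                ((2 * ((n : ℂ) + 1) + α - 1) ^ 2 - b ^ 2) +
              ((((n : ℂ) + 1) + α - 1) ^ 2 - a ^ 2) *
                ((((n : ℂ) + 1) + α - 1) ^ 2 - b ^ 2) *
                (13 * ((n : ℂ) + 1) ^ 2 - 10 * ((n : ℂ) + 1) * (1 - α) +
                  2 * (1 - α) ^ 2 - a ^ 2 - b ^ 2)) := by
  have hD := denom_add_natCast_ne_zero h1 h2 h3 h4
  have wz (n k : ℕ) : wzF a b (n + 1) (α + k) =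
      wzF a b n (α + (k + 1 : ℕ)) + wzG a b n (α + (k + 1 : ℕ)) - wzG a b n (α + k) := by
    rw [wzF_succ (fun j ↦ by simpa [add_assoc] using hD (k + j)), Nat.cast_succ, add_assoc α]
  have boundary (n : ℕ) : wzF a b n (α + (0 : ℕ)) + wzG a b n (α + (0 : ℕ)) =
      1 / 2 * acceleratedTerm α a b n := by
    rw [Nat.cast_zero, add_zero, half_mul_acceleratedTerm hD]
  calc
    _ = ∑' k : ℕ, wzF a b 0 (α + k) := by simp only [wzF_zero, denom, add_comm α]
    _ = ∑' n, (wzF a b n (α + (0 : ℕ)) + wzG a b n (α + (0 : ℕ))) :=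
      tsum_eq_tsum_add_of_wz (F := fun n k ↦ wzF a b n (α + k)) (G := fun n k ↦ wzG a b n (α + k))
        (summable_wzF a b α) (summable_wzG a b α) wz
    _ = ∑' n, 1 / 2 * acceleratedTerm α a b n := tsum_congr boundary
    _ = 1 / 2 * ∑' n, acceleratedTerm α a b n := tsum_mul_left
end
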